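/- Let f ∈ L^1(-1,1) and g ∈ LlogL(-1,1) be such that f·T(gχ_A) ∈ L^1(-1,1) for every Borel set A ⊆ (-1,1). Then the Poincaré–Bertrand formula T(gT(f) + fT(g)) = T(f)·T(g) − f·g holds almost everywhere on (-1,1). -/

import Mathlib

open MeasureTheory Set Filter

noncomputable section

/-- Lebesgue measure restricted to the interval `(-1, 1)`. -/
def μI : Measure ℝ := volume.restrict (Set.Ioo (-1 : ℝ) 1)

/-- The finite Hilbert transform: the principal-value limit
`T(f)(t) = lim_{ε→0⁺} (1/π) ∫_{x∈(-1,1), |x-t|≥ε} f(x)/(x-t) dx`. -/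
def FHT (f : ℝ → ℂ) (t : ℝ) : ℂ :=
  limUnder (nhdsWithin (0 : ℝ) (Set.Ioi 0)) fun ε : ℝ =>
    (Real.pi : ℂ)⁻¹ *
      ∫ x in {x : ℝ | x ∈ Set.Ioo (-1 : ℝ) 1 ∧ ε ≤ |x - t|}, f x / ((x : ℂ) - (t : ℂ))

/-- The operator `T̂(g)(x) = -(1-x²)^{-1/2} T(t ↦ √(1-t²) g(t))(x)`. -/
def hatT (g : ℝ → ℂ) (x : ℝ) : ℂ :=
  -((Real.sqrt (1 - x ^ 2) : ℂ))⁻¹ * FHT (fun t => (Real.sqrt (1 - t ^ 2) : ℂ) * g t) x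

/-- Membership in the Zygmund space `L log L(-1,1)`:
`f` is a.e. measurable on `(-1,1)` and `∫ |f| log⁺|f| < ∞`. -/
def MemLlogL (f : ℝ → ℂ) : Prop :=
  AEStronglyMeasurable f μI ∧
    IntegrableOn (fun x => ‖f x‖ * max (Real.log ‖f x‖) 0) (Set.Ioo (-1 : ℝ) 1)

/-- The distribution function `λ ↦ |{x ∈ (-1,1) : |f(x)| > λ}|`. -/
def distFun (f : ℝ → ℂ) (lam : ℝ) : ℝ :=
  (volume {x : ℝ | x ∈ Set.Ioo (-1 : ℝ) 1 ∧ lam < ‖f x‖}).toReal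

/-- The decreasing rearrangement `f*` of `f`, a function on `(0,2)`. -/
def decRearr (f : ℝ → ℂ) (t : ℝ) : ℝ :=
  sInf {lam : ℝ | 0 ≤ lam ∧ distFun f lam ≤ t}

/-- The `L log L` norm `‖f‖ = ∫_0^2 f*(t) log(2e/t) dt`. -/
def llogLNorm (f : ℝ → ℂ) : ℝ :=
  ∫ t in Set.Ioo (0 : ℝ) 2, decRearr f t * Real.log (2 * Real.exp 1 / t)

/-- The `L(log L)^α` norm `∫_0^2 f*(t) log^α(2e/t) dt` (for `α = 0` this is the `L¹` norm). -/
def zygNorm (α : ℝ) (f : ℝ → ℂ) : ℝ :=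
  ∫ t in Set.Ioo (0 : ℝ) 2, decRearr f t * Real.log (2 * Real.exp 1 / t) ^ α

/-- Membership in the Zygmund space `L(log L)^α(-1,1)`. -/
def MemZyg (α : ℝ) (f : ℝ → ℂ) : Prop :=
  AEStronglyMeasurable f μI ∧
    IntegrableOn (fun t => decRearr f t * Real.log (2 * Real.exp 1 / t) ^ α)
      (Set.Ioo (0 : ℝ) 2)

/-- Membership in `L(log L)²(-1,1)`: `∫ |f| (log(2+|f|))² < ∞`. -/
def MemLlogL2 (f : ℝ → ℂ) : Prop :=
  AEStronglyMeasurable f μI ∧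
    IntegrableOn (fun x => ‖f x‖ * Real.log (2 + ‖f x‖) ^ 2) (Set.Ioo (-1 : ℝ) 1)

/-- The constant `c(β,γ) = max{1/(1-β), 1/(1-γ), 1/(β+γ-1)}`. -/
def cBG (β γ : ℝ) : ℝ := max (max (1 / (1 - β)) (1 / (1 - γ))) (1 / (β + γ - 1))

/-!
Write `T` for `FHT` and let `C f (z) = π⁻¹ ∫ f(s) / (s - z) ds` be the Cauchy transform over
`(-1, 1)`. Almost everywhere it has the boundary values `T f + i f` from above and `T f - i f`
from below, so the formula is the boundary form of the identity `C (g T f + f T g) = C f * C g` on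
the upper half-plane. With `b(s) = (s - z)⁻¹`, partial fractions give `T (g b) = (T g - C g (z)) b`,
which turns that identity into the Parseval formula `∫ f T (g b) = -∫ g b T f`.

The boundary values exist because, for `f ≥ 0`, the function `F = C f` maps the upper half-plane
into itself. Fatou's theorem therefore applies to `(F + i)⁻¹`, and the Poisson formula for
`log (1 - i F)` bounds `log (1 + |F|²)` in mean, so that the limits are finite. At Lebesgue points
the limit of `F - i f` is the principal value `T f`.

For bounded `f` the Parseval formula is the limit of Fubini's theorem on horizontal lines: Cauchy
transforms of bounded functions are exponentially integrable there, whence uniform integrability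
against `g ∈ L log L`. For integrable `f` take truncations `fₙ`. The side with `fₙ T (g b)`
converges by dominated convergence. Applied to each `g χ_A`, the same argument shows that
`∫_A g T fₙ` converges for every Borel set `A`; by the Vitali-Hahn-Saks theorem the `g T fₙ` are
uniformly integrable. Since `T fₙ → T f` almost everywhere along a subsequence, Vitali's theorem
handles the other side.
-/

open scoped Topology ENNReal NNReal

namespace FiniteHilbert

/-- The Poisson kernel of the upper half-plane at height `y`, without the usual factor `π⁻¹`. -/
def poissonKernel (y u : ℝ) : ℝ := y / (u ^ 2 + y ^ 2)

section PoissonKernel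

variable {y : ℝ}

lemma poissonKernel_pos (hy : 0 < y) (u : ℝ) : 0 < poissonKernel y u := by
  unfold poissonKernel; positivity

lemma norm_poissonKernel (hy : 0 < y) (u : ℝ) : ‖(poissonKernel y u : ℂ)‖ = poissonKernel y u := by
  rw [Complex.norm_real, Real.norm_of_nonneg (poissonKernel_pos hy u).le]

lemma continuous_poissonKernel (hy : 0 < y) : Continuous (poissonKernel y) :=
  continuous_const.div (by fun_prop) fun u ↦ by positivity

lemma poissonKernel_le_inv (hy : 0 < y) (u : ℝ) : poissonKernel y u ≤ y⁻¹ := by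
  rw [poissonKernel, div_le_iff₀ (by positivity), inv_mul_eq_div, le_div_iff₀ hy]
  nlinarith [sq_nonneg u]

lemma poissonKernel_eq_inv_mul (hy : 0 < y) (u : ℝ) :
    poissonKernel y u = y⁻¹ * (1 + (u * y⁻¹) ^ 2)⁻¹ := by
  unfold poissonKernel
  field_simp
  ring

lemma integrable_poissonKernel (hy : 0 < y) (x : ℝ) :
    Integrable fun s ↦ poissonKernel y (s - x) := by
  simp_rw [poissonKernel_eq_inv_mul hy]
  exact ((integrable_inv_one_add_sq.comp_mul_right' (inv_pos.2 hy).ne').const_mul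
    y⁻¹).comp_sub_right x

lemma integrable_ofReal_poissonKernel (hy : 0 < y) (x : ℝ) :
    Integrable fun s ↦ (poissonKernel y (s - x) : ℂ) :=
  (integrable_poissonKernel hy x).ofReal

lemma integral_poissonKernel (hy : 0 < y) (x : ℝ) :
    ∫ s, poissonKernel y (s - x) = Real.pi := by
  rw [integral_sub_right_eq_self (poissonKernel y) x]
  simp_rw [poissonKernel_eq_inv_mul hy]
  rw [integral_const_mul, Measure.integral_comp_mul_right (fun u : ℝ ↦ (1 + u ^ 2)⁻¹),
    integral_univ_inv_one_add_sq, inv_inv, abs_of_pos hy, smul_eq_mul, inv_mul_cancel_left₀ hy.ne']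

lemma memLp_poissonKernel (hy : 0 < y) (x : ℝ) :
    MemLp (fun s ↦ (poissonKernel y (s - x) : ℂ)) 2 := by
  have hcont : Continuous fun s ↦ poissonKernel y (s - x) :=
    (continuous_poissonKernel hy).comp (by fun_prop)
  refine MemLp.ofReal ((memLp_two_iff_integrable_sq hcont.aestronglyMeasurable).2 ?_)
  simp only [sq]
  refine (integrable_poissonKernel hy x).bdd_mul (c := y⁻¹) hcont.aestronglyMeasurable
    (.of_forall fun s ↦ ?_)
  rw [Real.norm_of_nonneg (poissonKernel_pos hy _).le]
  exact poissonKernel_le_inv hy _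

end PoissonKernel

/-! ### The Poisson formula -/

lemma closure_upperHalfPlane : closure {z : ℂ | 0 < z.im} = {z | 0 ≤ z.im} :=
  Complex.closure_setOfPred_lt_im 0

/-- Cauchy's theorem on the rectangles `[-R, R] × [0, R]`. -/
lemma norm_intervalIntegral_le_of_diffContOnCl {Q : ℂ → ℂ} {C R : ℝ}
    (hQ : DiffContOnCl ℂ Q {z | 0 < z.im}) (hR : 0 < R)
    (hC : ∀ z : ℂ, 0 ≤ z.im → R ≤ ‖z‖ → ‖Q z‖ ≤ C) :
    ‖∫ s in (-R)..R, Q (s : ℝ)‖ ≤ 4 * C * R := by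
  have hrect := Complex.integral_boundary_rect_eq_zero_of_continuousOn_of_differentiableOn Q
    ⟨-R, 0⟩ ⟨R, R⟩ (hQ.continuousOn.mono ?_) (hQ.differentiableOn.mono ?_)
  · have htop : ‖∫ s in (-R)..R, Q (s + (R : ℝ) * Complex.I)‖ ≤ C * |R - -R| := by
      refine intervalIntegral.norm_integral_le_of_norm_le_const fun s _ ↦ hC _ (by simp [hR.le]) ?_
      simpa [abs_of_pos hR] using Complex.abs_im_le_norm (s + (R : ℝ) * Complex.I)
    have hside (c : ℝ) (hc : |c| = R) :
        ‖∫ t in (0 : ℝ)..R, Q ((c : ℝ) + t * Complex.I)‖ ≤ C * |R - 0| := by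
      refine intervalIntegral.norm_integral_le_of_norm_le_const fun t ht ↦ hC _ ?_ ?_
      · rw [uIoc_of_le hR.le] at ht
        simpa using ht.1.le
      · simpa [hc] using Complex.abs_re_le_norm (c + t * Complex.I)
    have hright := hside R (abs_of_pos hR)
    have hleft := hside (-R) (by rw [abs_neg, abs_of_pos hR])
    rw [sub_neg_eq_add, abs_of_pos (by positivity)] at htop
    rw [sub_zero, abs_of_pos hR] at hright hleft
    have hbottom : ∫ s in (-R)..R, Q (s : ℝ) = (∫ s in (-R)..R, Q (s + (R : ℝ) * Complex.I))
        - Complex.I • (∫ t in (0 : ℝ)..R, Q ((R : ℝ) + t * Complex.I))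
        + Complex.I • ∫ t in (0 : ℝ)..R, Q ((-R : ℝ) + t * Complex.I) := by
      simp only [Complex.ofReal_zero, zero_mul, add_zero] at hrect
      linear_combination hrect
    rw [hbottom]
    refine (norm_add_le_of_le (norm_sub_le_of_le htop ?_) ?_).trans_eq
      (by ring : C * (R + R) + C * R + C * R = _)
    · rwa [norm_smul, Complex.norm_I, one_mul]
    · rwa [norm_smul, Complex.norm_I, one_mul]
  · rintro z ⟨-, hz⟩
    rw [mem_preimage, uIcc_of_le hR.le] at hz
    exact closure_upperHalfPlane ▸ hz.1
  · rintro z ⟨-, hz⟩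
    rw [mem_preimage, min_eq_left hR.le] at hz
    exact hz.1

lemma integral_eq_zero_of_diffContOnCl {Q : ℂ → ℂ} {C R₀ : ℝ}
    (hQ : DiffContOnCl ℂ Q {z | 0 < z.im}) (hint : Integrable fun s : ℝ ↦ Q s)
    (hC : ∀ z : ℂ, 0 ≤ z.im → R₀ ≤ ‖z‖ → ‖Q z‖ ≤ C / ‖z‖ ^ 2) :
    ∫ s : ℝ, Q s = 0 := by
  have hlim := intervalIntegral_tendsto_integral hint tendsto_neg_atTop_atBot tendsto_id
  refine tendsto_nhds_unique hlim (squeeze_zero_norm' ?_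
    (tendsto_const_nhds.div_atTop tendsto_id : Tendsto (fun R : ℝ ↦ 4 * |C| / R) atTop (𝓝 0)))
  filter_upwards [eventually_ge_atTop R₀, eventually_gt_atTop 0] with R hR₀ hR
  refine (norm_intervalIntegral_le_of_diffContOnCl (C := |C| / R ^ 2) hQ hR fun z hz hRz ↦
    (hC z hz (hR₀.trans hRz)).trans ?_).trans_eq (by field_simp)
  gcongr
  exact le_abs_self C

lemma inv_sub_mul_sub_conj_eq (z : ℂ) (hz : 0 < z.im) (s : ℝ) :
    ((s - z) * (s - (starRingEnd ℂ) z))⁻¹ = (z.im : ℂ)⁻¹ * poissonKernel z.im (s - z.re) := by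
  have hprod : (s - z) * (s - (starRingEnd ℂ) z) = (((s - z.re) ^ 2 + z.im ^ 2 : ℝ) : ℂ) := by
    apply Complex.ext <;> simp [sq]; ring
  rw [hprod, poissonKernel, Complex.ofReal_div, div_eq_mul_inv, inv_mul_cancel_left₀]
  exact_mod_cast hz.ne'

lemma diffContOnCl_dslope_div {U : ℂ → ℂ} (hU : DiffContOnCl ℂ U {z | 0 < z.im}) {z : ℂ}
    (hz : 0 < z.im) :
    DiffContOnCl ℂ (fun w ↦ dslope U z w / (w - (starRingEnd ℂ) z)) {z | 0 < z.im} := by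
  have hnhds : {z : ℂ | 0 < z.im} ∈ 𝓝 z :=
    (isOpen_lt continuous_const Complex.continuous_im).mem_nhds hz
  have hne {w : ℂ} (hw : 0 ≤ w.im) : w - (starRingEnd ℂ) z ≠ 0 := fun h ↦ by
    have := congrArg Complex.im h
    simp only [Complex.sub_im, Complex.conj_im, Complex.zero_im] at this
    linarith
  constructor
  · exact ((Complex.differentiableOn_dslope hnhds).2 hU.differentiableOn).div (by fun_prop)
      fun w hw ↦ hne (le_of_lt hw)
  · refine ((continuousOn_dslope (mem_of_superset hnhds subset_closure)).2
      ⟨hU.continuousOn, hU.differentiableOn.differentiableAt hnhds⟩).div (by fun_prop)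
      fun w hw ↦ hne ?_
    rwa [closure_upperHalfPlane] at hw

/-- Cauchy's theorem for `w ↦ (U w - U z) / ((w - z) * (w - conj z))`. -/
theorem integral_poissonKernel_mul {U : ℂ → ℂ} {M : ℝ} (hU : DiffContOnCl ℂ U {z | 0 < z.im})
    (hM : ∀ z : ℂ, 0 ≤ z.im → ‖U z‖ ≤ M) {z : ℂ} (hz : 0 < z.im) :
    ∫ s : ℝ, (poissonKernel z.im (s - z.re) : ℂ) * U s = Real.pi * U z := by
  have hP := integrable_ofReal_poissonKernel hz z.re
  have hslice : Continuous fun s : ℝ ↦ U s :=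
    hU.continuousOn.comp_continuous (by fun_prop) fun s ↦ by simp
  have hPU : Integrable fun s : ℝ ↦ (poissonKernel z.im (s - z.re) : ℂ) * U s :=
    hP.mul_bdd hslice.aestronglyMeasurable (.of_forall fun s ↦ hM s (by simp))
  have hQeq (w : ℂ) (hw : w ≠ z) : dslope U z w / (w - (starRingEnd ℂ) z) =
      ((w - z) * (w - (starRingEnd ℂ) z))⁻¹ * (U w - U z) := by
    rw [dslope_of_ne _ hw, slope_def_field, div_div, div_eq_inv_mul]
  have hQline (s : ℝ) : dslope U z s / (s - (starRingEnd ℂ) z) = (z.im : ℂ)⁻¹ *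
      ((poissonKernel z.im (s - z.re) : ℂ) * U s - poissonKernel z.im (s - z.re) * U z) := by
    rw [hQeq _ fun h ↦ hz.ne (by simpa using congrArg Complex.im h), inv_sub_mul_sub_conj_eq z hz,
      mul_assoc, mul_sub]
  have hzero : ∫ s : ℝ, dslope U z s / (s - (starRingEnd ℂ) z) = 0 := by
    refine integral_eq_zero_of_diffContOnCl (R₀ := 2 * ‖z‖ + 1) (C := 8 * M)
      (diffContOnCl_dslope_div hU hz) ?_ fun w hw hwz ↦ ?_
    · simp_rw [hQline]
      exact (hPU.sub (hP.mul_const _)).const_mul _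
    · have hz₀ := norm_nonneg z
      have hfar (v : ℂ) (hv : ‖v‖ = ‖z‖) : ‖w‖ / 2 ≤ ‖w - v‖ := by
        linarith [norm_sub_norm_le w v]
      have hnum : ‖U w - U z‖ ≤ M + M := norm_sub_le_of_le (hM w hw) (hM z hz.le)
      have hM₀ : 0 ≤ M := (norm_nonneg _).trans (hM z hz.le)
      rw [hQeq w (by rintro rfl; linarith), norm_mul, norm_inv, norm_mul, inv_mul_eq_div]
      calc ‖U w - U z‖ / (‖w - z‖ * ‖w - (starRingEnd ℂ) z‖)
        _ ≤ (M + M) / (‖w‖ / 2 * (‖w‖ / 2)) := by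
          have hw₀ : 0 < ‖w‖ := by linarith
          gcongr
          · exact hfar z rfl
          · exact hfar _ (Complex.norm_conj z)
        _ = 8 * M / ‖w‖ ^ 2 := by field_simp; ring
  simp_rw [hQline] at hzero
  rw [integral_const_mul, integral_sub hPU (hP.mul_const _), integral_mul_const,
    integral_complex_ofReal, integral_poissonKernel hz] at hzero
  have him : (z.im : ℂ)⁻¹ ≠ 0 := inv_ne_zero (by exact_mod_cast hz.ne')
  exact sub_eq_zero.1 ((mul_eq_zero.1 hzero).resolve_left him)

/-! ### Poisson integrals at Lebesgue points -/

section LebesguePoints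

variable {x ε : ℝ}

lemma ofReal_poissonKernel_le_tsum (hε : 0 < ε) (s : ℝ) :
    ENNReal.ofReal (poissonKernel ε (s - x)) ≤
      ∑' j : ℕ, ENNReal.ofReal (4 * (4 : ℝ)⁻¹ ^ j / ε) *
        (Metric.closedBall x (2 ^ j * ε)).indicator 1 s := by
  have hex : ∃ j : ℕ, |s - x| ≤ 2 ^ j * ε := by
    obtain ⟨j, hj⟩ := pow_unbounded_of_one_lt (|s - x| / ε) one_lt_two
    exact ⟨j, ((div_lt_iff₀ hε).1 hj).le⟩
  classical
  refine le_trans ?_ (ENNReal.le_tsum (Nat.find hex))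
  have hspec : s ∈ Metric.closedBall x (2 ^ Nat.find hex * ε) := by
    simpa [Real.dist_eq] using Nat.find_spec hex
  rw [indicator_of_mem hspec, Pi.one_apply, mul_one]
  refine ENNReal.ofReal_le_ofReal ?_
  rw [poissonKernel, div_le_div_iff₀ (by positivity) hε]
  rcases hj : Nat.find hex with _ | k
  · nlinarith [sq_nonneg (s - x)]
  · have hlt : 2 ^ k * ε < |s - x| := not_le.1 (Nat.find_min hex (by omega))
    have hpow : (4 : ℝ)⁻¹ ^ k * (2 ^ k) ^ 2 = 1 := by
      rw [← pow_mul, mul_comm k 2, pow_mul, ← mul_pow]; norm_num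
    calc ε * ε = (4 : ℝ)⁻¹ ^ k * (2 ^ k * ε) ^ 2 := by rw [mul_pow, ← mul_assoc, hpow]; ring
      _ ≤ (4 : ℝ)⁻¹ ^ k * |s - x| ^ 2 := by gcongr
      _ ≤ (4 : ℝ)⁻¹ ^ k * ((s - x) ^ 2 + ε ^ 2) := by
        rw [sq_abs]; gcongr; exact le_add_of_nonneg_right (sq_nonneg ε)
      _ = 4 * (4 : ℝ)⁻¹ ^ (k + 1) * ((s - x) ^ 2 + ε ^ 2) := by ring

lemma lintegral_indicator_closedBall_le {φ : ℝ → ENNReal} {r₀ r η : ℝ} (hη : 0 ≤ η) (hr₀ : 0 < r₀)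
    (hr : 0 < r)
    (h : ∀ r, 0 < r → r ≤ r₀ → ∫⁻ s in Metric.closedBall x r, φ s ≤ ENNReal.ofReal (2 * η * r)) :
    ∫⁻ s in Metric.closedBall x r₀, (Metric.closedBall x r).indicator φ s ≤
      ENNReal.ofReal (2 * η * r) := by
  rw [setLIntegral_indicator Metric.isClosed_closedBall.measurableSet]
  rcases le_total r r₀ with hle | hle
  · exact (lintegral_mono_set inter_subset_left).trans (h r hr hle)
  · refine (lintegral_mono_set inter_subset_right).trans ((h r₀ hr₀ le_rfl).trans ?_)
    exact ENNReal.ofReal_le_ofReal (by gcongr)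

lemma setLIntegral_poissonKernel_mul_le {φ : ℝ → ENNReal} (hφ : AEMeasurable φ) {r₀ η : ℝ}
    (hη : 0 ≤ η) (hε : 0 < ε) (hr₀ : 0 < r₀)
    (h : ∀ r, 0 < r → r ≤ r₀ → ∫⁻ s in Metric.closedBall x r, φ s ≤ ENNReal.ofReal (2 * η * r)) :
    ∫⁻ s in Metric.closedBall x r₀, ENNReal.ofReal (poissonKernel ε (s - x)) * φ s ≤
      ENNReal.ofReal (16 * η) := by
  calc ∫⁻ s in Metric.closedBall x r₀, ENNReal.ofReal (poissonKernel ε (s - x)) * φ s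
    _ ≤ ∫⁻ s in Metric.closedBall x r₀, ∑' j : ℕ, ENNReal.ofReal (4 * (4 : ℝ)⁻¹ ^ j / ε) *
          (Metric.closedBall x (2 ^ j * ε)).indicator φ s := by
      refine lintegral_mono fun s ↦ ?_
      refine (mul_le_mul_left (ofReal_poissonKernel_le_tsum hε s) (φ s)).trans_eq ?_
      rw [← ENNReal.tsum_mul_right]
      refine tsum_congr fun j ↦ ?_
      rw [mul_assoc, ← indicator_mul_left, Pi.one_def]
      simp
    _ = ∑' j : ℕ, ENNReal.ofReal (4 * (4 : ℝ)⁻¹ ^ j / ε) *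
          ∫⁻ s in Metric.closedBall x r₀, (Metric.closedBall x (2 ^ j * ε)).indicator φ s := by
      have hmeas (j : ℕ) := hφ.indicator
        (Metric.isClosed_closedBall (x := x) (ε := 2 ^ j * ε)).measurableSet
      rw [lintegral_tsum fun j ↦ ((hmeas j).const_mul _).restrict]
      exact tsum_congr fun j ↦ lintegral_const_mul'' _ (hmeas j).restrict
    _ ≤ ∑' j : ℕ, ENNReal.ofReal (8 * η * (1 / 2) ^ j) := by
      refine ENNReal.tsum_le_tsum fun j ↦ ?_
      refine (mul_le_mul_right
        (lintegral_indicator_closedBall_le hη hr₀ (by positivity) h) _).trans_eq ?_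
      rw [← ENNReal.ofReal_mul (by positivity)]
      have hpow : (4 : ℝ)⁻¹ ^ j * 2 ^ j = (1 / 2) ^ j := by rw [← mul_pow]; norm_num
      rw [← hpow]
      congr 1
      field_simp
      ring
    _ = ENNReal.ofReal (16 * η) := by
      rw [← ENNReal.ofReal_tsum_of_nonneg (fun j ↦ by positivity)
        (summable_geometric_two.mul_left _), tsum_mul_left, tsum_geometric_two]
      ring_nf

lemma poissonKernel_le_mul_poissonKernel_one {r u : ℝ} (hε : 0 < ε) (hr : 0 < r) (hu : r ≤ |u|) :
    poissonKernel ε u ≤ ε * (1 + (r ^ 2)⁻¹) * poissonKernel 1 u := by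
  have hu2 : r ^ 2 ≤ u ^ 2 := by rw [← sq_abs u]; gcongr
  have hu0 : 0 < u ^ 2 := (by positivity : 0 < r ^ 2).trans_le hu2
  rw [poissonKernel, poissonKernel, div_le_iff₀ (by positivity), mul_assoc, mul_assoc]
  refine le_mul_of_one_le_right hε.le ?_
  rw [one_pow, one_div_mul_eq_div, mul_div_assoc', le_div_iff₀ (by positivity), one_mul]
  have hinv : 1 ≤ (r ^ 2)⁻¹ * u ^ 2 := by
    rwa [inv_mul_eq_div, le_div_iff₀ (by positivity), one_mul]
  nlinarith [mul_nonneg (inv_nonneg.2 (sq_nonneg r)) (sq_nonneg ε), sq_nonneg ε]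

lemma setLIntegral_compl_poissonKernel_mul_le {φ : ℝ → ℝ} (hφ : 0 ≤ φ) {r : ℝ} (hε : 0 < ε)
    (hr : 0 < r) (hint : Integrable fun s ↦ poissonKernel 1 (s - x) * φ s) :
    ∫⁻ s in (Metric.closedBall x r)ᶜ,
        ENNReal.ofReal (poissonKernel ε (s - x)) * ENNReal.ofReal (φ s) ≤
      ENNReal.ofReal (ε * ((1 + (r ^ 2)⁻¹) * ∫ s, poissonKernel 1 (s - x) * φ s)) := by
  rw [← mul_assoc, ← integral_const_mul, ofReal_integral_eq_lintegral_ofReal (hint.const_mul _)]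
  · refine (setLIntegral_mono' Metric.isClosed_closedBall.measurableSet.compl fun s hs ↦ ?_).trans
      (setLIntegral_le_lintegral _ _)
    rw [← ENNReal.ofReal_mul (poissonKernel_pos hε _).le, ← mul_assoc]
    have hs : r ≤ |s - x| := by
      simp only [mem_compl_iff, Metric.mem_closedBall, Real.dist_eq, not_le] at hs
      exact hs.le
    exact ENNReal.ofReal_le_ofReal (mul_le_mul_of_nonneg_right
      (poissonKernel_le_mul_poissonKernel_one hε hr hs) (hφ s))
  · exact .of_forall fun s ↦ mul_nonneg (by positivity)
      (mul_nonneg (poissonKernel_pos one_pos _).le (hφ s))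

lemma exists_setLIntegral_closedBall_le {φ : ℝ → ℝ} (hφ : 0 ≤ φ) (hloc : LocallyIntegrable φ)
    (havg : Tendsto (fun r ↦ ⨍ s in Metric.closedBall x r, φ s) (𝓝[>] 0) (𝓝 0))
    {η : ℝ} (hη : 0 < η) :
    ∃ r₀ > 0, ∀ r, 0 < r → r ≤ r₀ →
      ∫⁻ s in Metric.closedBall x r, ENNReal.ofReal (φ s) ≤ ENNReal.ofReal (2 * η * r) := by
  obtain ⟨r₀, hr₀, hsub⟩ := mem_nhdsGT_iff_exists_Ioc_subset.1 (havg.eventually (gt_mem_nhds hη))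
  refine ⟨r₀, hr₀, fun r hr hle ↦ ?_⟩
  have hlt : ⨍ s in Metric.closedBall x r, φ s < η := hsub ⟨hr, hle⟩
  rw [setAverage_eq, measureReal_def, Real.volume_closedBall, smul_eq_mul,
    ENNReal.toReal_ofReal (by positivity), inv_mul_lt_iff₀ (by positivity)] at hlt
  rw [← ofReal_integral_eq_lintegral_ofReal
    (hloc.integrableOn_isCompact (isCompact_closedBall x r)) (.of_forall hφ)]
  exact ENNReal.ofReal_le_ofReal (by linarith)

lemma tendsto_integral_poissonKernel_mul {φ : ℝ → ℝ} (hφ : 0 ≤ φ) (hloc : LocallyIntegrable φ)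
    (hint : Integrable fun s ↦ poissonKernel 1 (s - x) * φ s)
    (havg : Tendsto (fun r ↦ ⨍ s in Metric.closedBall x r, φ s) (𝓝[>] 0) (𝓝 0)) :
    Tendsto (fun ε ↦ ∫ s, poissonKernel ε (s - x) * φ s) (𝓝[>] 0) (𝓝 0) := by
  rw [Metric.tendsto_nhds]
  intro e he
  obtain ⟨r₀, hr₀, hnear⟩ := exists_setLIntegral_closedBall_le hφ hloc havg
    (show 0 < e / 64 by positivity)
  set C := (1 + (r₀ ^ 2)⁻¹) * ∫ s, poissonKernel 1 (s - x) * φ s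
  have hC₀ : 0 ≤ C := mul_nonneg (by positivity)
    (integral_nonneg fun s ↦ mul_nonneg (poissonKernel_pos one_pos _).le (hφ s))
  have hC : Tendsto (fun ε : ℝ ↦ ε * C) (𝓝[>] 0) (𝓝 0) := by
    simpa using (tendsto_id.mono_left nhdsWithin_le_nhds : Tendsto id (𝓝[>] (0 : ℝ)) _).mul_const C
  filter_upwards [hC.eventually (gt_mem_nhds (show 0 < e / 4 by positivity)),
    self_mem_nhdsWithin] with ε hεC hε
  rw [mem_Ioi] at hε
  have hnonneg (s : ℝ) : 0 ≤ poissonKernel ε (s - x) * φ s :=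
    mul_nonneg (poissonKernel_pos hε _).le (hφ s)
  have htotal : ∫⁻ s, ENNReal.ofReal (poissonKernel ε (s - x) * φ s) ≤
      ENNReal.ofReal (16 * (e / 64)) + ENNReal.ofReal (ε * C) := by
    rw [← lintegral_add_compl _ (Metric.isClosed_closedBall (x := x) (ε := r₀)).measurableSet]
    simp_rw [ENNReal.ofReal_mul (poissonKernel_pos hε _).le]
    exact add_le_add (setLIntegral_poissonKernel_mul_le
      hloc.aestronglyMeasurable.aemeasurable.ennreal_ofReal (by positivity) hε hr₀ hnear)
      (setLIntegral_compl_poissonKernel_mul_le hφ hε hr₀ hint)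
  rw [← ENNReal.ofReal_add (by positivity) (mul_nonneg hε.le hC₀)] at htotal
  rw [Real.dist_eq, sub_zero, abs_of_nonneg (integral_nonneg hnonneg),
    integral_eq_lintegral_of_nonneg_ae (.of_forall hnonneg)
      ((integrable_poissonKernel hε x).1.mul hloc.aestronglyMeasurable)]
  refine (ENNReal.toReal_le_of_le_ofReal (by positivity) htotal).trans_lt ?_
  linarith

theorem ae_tendsto_integral_poissonKernel_mul_norm_sub {h : ℝ → ℂ} (hloc : LocallyIntegrable h)
    (hint : ∀ x, Integrable fun s ↦ (poissonKernel 1 (s - x) : ℂ) * h s) :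
    ∀ᵐ x, Tendsto (fun ε ↦ ∫ s, poissonKernel ε (s - x) * ‖h s - h x‖) (𝓝[>] 0) (𝓝 0) := by
  filter_upwards [IsUnifLocDoublingMeasure.ae_tendsto_average_norm_sub volume hloc 1] with x hx
  have hdiff : LocallyIntegrable fun s ↦ h s - h x := hloc.sub (locallyIntegrable_const (h x))
  refine tendsto_integral_poissonKernel_mul (fun s ↦ norm_nonneg _) (fun y ↦ (hdiff y).norm) ?_ ?_
  · refine ((hint x).sub ((integrable_ofReal_poissonKernel one_pos x).mul_const (h x))).norm.congr
      (.of_forall fun s ↦ ?_)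
    dsimp only [Pi.sub_apply]
    rw [← mul_sub, norm_mul, norm_poissonKernel one_pos]
  · refine hx (fun _ ↦ x) (fun r ↦ r) tendsto_id ?_
    filter_upwards [self_mem_nhdsWithin] with r hr
    simpa using le_of_lt hr

theorem ae_tendsto_integral_poissonKernel_mul {h : ℝ → ℂ} (hloc : LocallyIntegrable h)
    (hint : ∀ y > 0, ∀ x, Integrable fun s ↦ (poissonKernel y (s - x) : ℂ) * h s) :
    ∀ᵐ x, Tendsto (fun ε ↦ ∫ s, (poissonKernel ε (s - x) : ℂ) * h s) (𝓝[>] 0)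
      (𝓝 (Real.pi * h x)) := by
  filter_upwards [ae_tendsto_integral_poissonKernel_mul_norm_sub hloc (hint 1 one_pos)] with x hx
  rw [tendsto_iff_norm_sub_tendsto_zero]
  refine squeeze_zero' (.of_forall fun _ ↦ norm_nonneg _) ?_ hx
  filter_upwards [self_mem_nhdsWithin] with ε hε
  have hP := integrable_ofReal_poissonKernel (mem_Ioi.1 hε) x
  rw [← integral_poissonKernel hε x, ← integral_complex_ofReal, ← integral_mul_const,
    ← integral_sub (hint ε hε x) (hP.mul_const _)]
  refine (norm_integral_le_integral_norm _).trans_eq (integral_congr_ae (.of_forall fun s ↦ ?_))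
  dsimp only
  rw [← mul_sub, norm_mul, norm_poissonKernel hε]

end LebesguePoints

/-! ### Fatou's theorem -/

lemma exists_tendsto_inner_of_norm_le {ι E : Type*} [NormedAddCommGroup E] [InnerProductSpace ℂ E]
    [CompleteSpace E] (l : Ultrafilter ι) {u : ι → E} {R : ℝ} (hu : ∀ i, ‖u i‖ ≤ R) :
    ∃ v : E, ∀ k : E, Tendsto (fun i ↦ inner ℂ (u i) k) l (𝓝 (inner ℂ v k)) := by
  set Φ : ι → WeakDual ℂ E := fun i ↦
    StrongDual.toWeakDual (InnerProductSpace.toDual ℂ E (u i)) with hΦ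
  obtain ⟨φ, -, hφ⟩ := (WeakDual.isCompact_closedBall (𝕜 := ℂ) (E := E) 0 R).ultrafilter_le_nhds
    (l.map Φ) (by
      rw [Ultrafilter.coe_map, le_principal_iff, mem_map]
      refine Eventually.of_forall fun i ↦ ?_
      simpa [hΦ] using hu i)
  refine ⟨(InnerProductSpace.toDual ℂ E).symm (WeakDual.toStrongDual φ), fun k ↦ ?_⟩
  rw [InnerProductSpace.toDual_symm_apply]
  exact ((WeakDual.eval_continuous k).tendsto φ).comp (hφ : Tendsto Φ l (𝓝 φ))

lemma exists_tendsto_integral_mul_of_eLpNorm_le {ι α : Type*} [MeasurableSpace α] {μ : Measure α}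
    (l : Ultrafilter ι) {u : ι → α → ℂ} {R : NNReal} (hu : ∀ i, MemLp (u i) 2 μ)
    (hR : ∀ i, eLpNorm (u i) 2 μ ≤ R) :
    ∃ v, MemLp v 2 μ ∧ ∀ k, MemLp k 2 μ →
      Tendsto (fun i ↦ ∫ s, k s * u i s ∂μ) l (𝓝 (∫ s, k s * v s ∂μ)) := by
  obtain ⟨v, hv⟩ := exists_tendsto_inner_of_norm_le l (u := fun i ↦ (hu i).toLp (u i)) (R := R)
    fun i ↦ by
      rw [Lp.norm_toLp]
      exact ENNReal.toReal_le_of_le_ofReal R.2 (by simpa using hR i)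
  refine ⟨v, Lp.memLp v, fun k hk ↦ ?_⟩
  have hinner (w : Lp ℂ 2 μ) (w' : α → ℂ) (hw : w =ᵐ[μ] w') :
      ∫ s, k s * w' s ∂μ = (starRingEnd ℂ) (inner ℂ w (hk.star.toLp (star k))) := by
    rw [inner_conj_symm, L2.inner_def]
    refine integral_congr_ae ?_
    filter_upwards [hk.star.coeFn_toLp, hw] with s hks hws
    simp [hks, hws, mul_comm]
  simp_rw [hinner _ _ (hu _).coeFn_toLp, hinner v v .rfl]
  exact (Complex.continuous_conj.tendsto _).comp (hv _)

lemma one_le_norm_add_I {z : ℂ} (hz : 0 ≤ z.im) : 1 ≤ ‖z + Complex.I‖ :=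
  (by simpa using hz : 1 ≤ (z + Complex.I).im).trans
    ((le_abs_self _).trans (Complex.abs_im_le_norm _))

lemma diffContOnCl_comp_add_const {U : ℂ → ℂ} (hU : DifferentiableOn ℂ U {z | 0 < z.im}) {δ : ℝ}
    (hδ : 0 < δ) : DiffContOnCl ℂ (fun z ↦ U (z + δ * Complex.I)) {z | 0 < z.im} := by
  have hmaps : MapsTo (fun z : ℂ ↦ z + δ * Complex.I) {z | 0 ≤ z.im} {z | 0 < z.im} :=
    fun z (hz : 0 ≤ z.im) ↦ by simpa using add_pos_of_nonneg_of_pos hz hδ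
  have hcomp := hU.comp (f := fun z : ℂ ↦ z + δ * Complex.I) (by fun_prop) hmaps
  exact ⟨hcomp.mono fun z (hz : 0 < z.im) ↦ hz.le, closure_upperHalfPlane ▸ hcomp.continuousOn⟩

lemma tendsto_comp_add_mul_I {U : ℂ → ℂ} (hU : DifferentiableOn ℂ U {z | 0 < z.im}) {z : ℂ}
    (hz : 0 < z.im) : Tendsto (fun δ : ℝ ↦ U (z + δ * Complex.I)) (𝓝[>] 0) (𝓝 (U z)) := by
  have hU' : ContinuousAt U z := (hU.differentiableAt
    ((isOpen_lt continuous_const Complex.continuous_im).mem_nhds hz)).continuousAt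
  have hadd : Tendsto (fun δ : ℝ ↦ z + δ * Complex.I) (𝓝[>] 0) (𝓝 z) := by
    refine Tendsto.mono_left ?_ nhdsWithin_le_nhds
    simpa using (by fun_prop : Continuous fun δ : ℝ ↦ z + δ * Complex.I).tendsto 0
  exact hU'.tendsto.comp hadd

lemma norm_slice_le {W : ℂ → ℂ} {M : ℝ} (hM : ∀ z : ℂ, 0 < z.im → ‖W z‖ ≤ M / ‖z + Complex.I‖)
    {δ : ℝ} (hδ : 0 < δ) (s : ℝ) : ‖W (s + δ * Complex.I)‖ ≤ ‖|M| * √((1 + s ^ 2)⁻¹)‖ := by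
  rw [Real.norm_of_nonneg (by positivity), Real.sqrt_inv, ← div_eq_mul_inv]
  have hnorm : √(1 + s ^ 2) ≤ ‖(s + δ * Complex.I : ℂ) + Complex.I‖ := by
    rw [Complex.norm_eq_sqrt_sq_add_sq]
    refine Real.sqrt_le_sqrt ?_
    simp only [Complex.add_re, Complex.ofReal_re, Complex.mul_re, Complex.I_re, Complex.add_im,
      Complex.ofReal_im, Complex.mul_im, Complex.I_im]
    nlinarith
  refine (hM _ (by simpa using hδ)).trans ?_
  gcongr
  exact le_abs_self M

lemma memLp_sqrt_inv_one_add_sq : MemLp (fun s : ℝ ↦ √((1 + s ^ 2)⁻¹)) 2 := by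
  have hcont : Continuous fun s : ℝ ↦ √((1 + s ^ 2)⁻¹) :=
    Real.continuous_sqrt.comp (Continuous.inv₀ (by fun_prop) fun s ↦ by positivity)
  exact (memLp_two_iff_integrable_sq hcont.aestronglyMeasurable).2
    (integrable_inv_one_add_sq.congr (.of_forall fun s ↦ (Real.sq_sqrt (by positivity)).symm))

/-- The boundary function is a weak `L²` limit of horizontal slices, and the Poisson formula passes
to the limit. -/
lemma exists_memLp_integral_poissonKernel_mul {W : ℂ → ℂ}
    (hW : DifferentiableOn ℂ W {z | 0 < z.im}) {M : ℝ}
    (hM : ∀ z : ℂ, 0 < z.im → ‖W z‖ ≤ M / ‖z + Complex.I‖) :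
    ∃ v : ℝ → ℂ, MemLp v 2 ∧ ∀ z : ℂ, 0 < z.im →
      ∫ s, (poissonKernel z.im (s - z.re) : ℂ) * v s = Real.pi * W z := by
  obtain ⟨d, -, hd₀, hd⟩ := exists_seq_strictAnti_tendsto_nhdsWithin (0 : ℝ)
  have hslice (n : ℕ) : Continuous fun s : ℝ ↦ W (s + d n * Complex.I) :=
    hW.continuousOn.comp_continuous (by fun_prop) fun s ↦ by simpa using hd₀ n
  have hb : MemLp (fun s : ℝ ↦ |M| * √((1 + s ^ 2)⁻¹)) 2 := memLp_sqrt_inv_one_add_sq.const_mul |M|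
  have hmem (n : ℕ) : MemLp (fun s : ℝ ↦ W (s + d n * Complex.I)) 2 :=
    hb.mono (hslice n).aestronglyMeasurable (.of_forall (norm_slice_le hM (hd₀ n)))
  obtain ⟨v, hv, hlim⟩ := exists_tendsto_integral_mul_of_eLpNorm_le (hyperfilter ℕ) hmem
    (R := (eLpNorm (fun s : ℝ ↦ |M| * √((1 + s ^ 2)⁻¹)) 2).toNNReal) fun n ↦ by
      rw [ENNReal.coe_toNNReal hb.eLpNorm_ne_top]
      exact eLpNorm_mono (norm_slice_le hM (hd₀ n))
  refine ⟨v, hv, fun z hz ↦ tendsto_nhds_unique (hlim _ (memLp_poissonKernel hz z.re)) ?_⟩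
  have hformula (n : ℕ) : ∫ s : ℝ, (poissonKernel z.im (s - z.re) : ℂ) * W (s + d n * Complex.I) =
      Real.pi * W (z + d n * Complex.I) := by
    refine integral_poissonKernel_mul (M := |M|) (diffContOnCl_comp_add_const hW (hd₀ n))
      (fun w hw ↦ ?_) hz
    have him : 0 < (w + d n * Complex.I).im := by simpa using add_pos_of_nonneg_of_pos hw (hd₀ n)
    refine (hM _ him).trans ((div_le_div_of_nonneg_right (le_abs_self M) (norm_nonneg _)).trans ?_)
    exact div_le_self (abs_nonneg M) (one_le_norm_add_I him.le)
  simp_rw [hformula]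
  exact ((tendsto_comp_add_mul_I hW hz).comp (hd.mono_left Nat.hyperfilter_le_atTop)).const_mul _

theorem ae_exists_tendsto_of_norm_le {U : ℂ → ℂ} {M : ℝ}
    (hU : DifferentiableOn ℂ U {z | 0 < z.im}) (hM : ∀ z : ℂ, 0 < z.im → ‖U z‖ ≤ M) :
    ∀ᵐ x : ℝ, ∃ l, Tendsto (fun δ : ℝ ↦ U (x + δ * Complex.I)) (𝓝[>] 0) (𝓝 l) := by
  have hne {z : ℂ} (hz : 0 < z.im) : z + Complex.I ≠ 0 :=
    norm_pos_iff.1 (one_pos.trans_le (one_le_norm_add_I hz.le))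
  obtain ⟨v, hv, hrep⟩ := exists_memLp_integral_poissonKernel_mul
    (W := fun z ↦ U z / (z + Complex.I)) (M := M) (hU.div (by fun_prop) fun z hz ↦ hne hz)
    fun z hz ↦ by rw [norm_div]; gcongr; exact hM z hz
  filter_upwards [ae_tendsto_integral_poissonKernel_mul (hv.locallyIntegrable one_le_two)
    fun y hy x ↦ (memLp_poissonKernel hy x).integrable_mul hv] with x hx
  have hfactor : Tendsto (fun δ : ℝ ↦ (Real.pi : ℂ)⁻¹ * (x + δ * Complex.I + Complex.I)) (𝓝[>] 0)
      (𝓝 ((Real.pi : ℂ)⁻¹ * (x + Complex.I))) := by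
    refine Tendsto.mono_left ?_ nhdsWithin_le_nhds
    simpa using (by fun_prop :
      Continuous fun δ : ℝ ↦ (Real.pi : ℂ)⁻¹ * (x + δ * Complex.I + Complex.I)).tendsto 0
  refine ⟨_, (hfactor.mul hx).congr' ?_⟩
  filter_upwards [self_mem_nhdsWithin] with δ hδ
  have hz : 0 < (x + δ * Complex.I : ℂ).im := by simpa using hδ
  have hrepδ := hrep _ hz
  simp only [Complex.add_im, Complex.ofReal_im, Complex.mul_im, Complex.ofReal_re, Complex.I_im,
    mul_one, Complex.I_re, mul_zero, add_zero, zero_add, Complex.add_re, Complex.mul_re,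
    sub_zero] at hrepδ
  rw [hrepδ]
  field_simp [hne hz]

/-! ### The Cauchy transform -/

/-- The Cauchy transform `z ↦ π⁻¹ ∫ f(s) / (s - z) dμ(s)` of the complex measure `f dμ`, normalised
like the Hilbert transform. -/
def cauchyTransform (μ : Measure ℝ) (f : ℝ → ℂ) (z : ℂ) : ℂ :=
  (Real.pi : ℂ)⁻¹ * ∫ s, f s / ((s : ℂ) - z) ∂μ

section CauchyTransform

variable {μ : Measure ℝ} {f g : ℝ → ℂ} {z : ℂ}

lemma ofReal_sub_ne_zero (hz : z.im ≠ 0) (s : ℝ) : (s : ℂ) - z ≠ 0 := fun h ↦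
  hz (by simpa using congrArg Complex.im h)

lemma norm_inv_ofReal_sub_le (hz : z.im ≠ 0) (s : ℝ) : ‖((s : ℂ) - z)⁻¹‖ ≤ |z.im|⁻¹ := by
  rw [norm_inv]
  exact inv_anti₀ (abs_pos.2 hz) (by simpa using Complex.abs_im_le_norm ((s : ℂ) - z))

lemma continuous_inv_ofReal_sub (hz : z.im ≠ 0) : Continuous fun s : ℝ ↦ ((s : ℂ) - z)⁻¹ :=
  Continuous.inv₀ (by fun_prop) (ofReal_sub_ne_zero hz)

lemma integrable_div_ofReal_sub (hf : Integrable f μ) (hz : z.im ≠ 0) :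
    Integrable (fun s ↦ f s / ((s : ℂ) - z)) μ := by
  simp_rw [div_eq_mul_inv]
  exact hf.mul_bdd (continuous_inv_ofReal_sub hz).aestronglyMeasurable
    (.of_forall (norm_inv_ofReal_sub_le hz))

lemma norm_cauchyTransform_le (hf : Integrable f μ) (hz : z.im ≠ 0) :
    ‖cauchyTransform μ f z‖ ≤ Real.pi⁻¹ * (|z.im|⁻¹ * ∫ s, ‖f s‖ ∂μ) := by
  rw [cauchyTransform, norm_mul, norm_inv, Complex.norm_real, Real.norm_of_nonneg Real.pi_pos.le,
    ← integral_const_mul]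
  gcongr
  refine (norm_integral_le_integral_norm _).trans (integral_mono
    (integrable_div_ofReal_sub hf hz).norm (hf.norm.const_mul _) fun s ↦ ?_)
  dsimp only
  rw [div_eq_inv_mul, norm_mul]
  gcongr
  exact norm_inv_ofReal_sub_le hz s

lemma hasDerivAt_div_ofReal_sub (hz : z.im ≠ 0) (s : ℝ) (c : ℂ) :
    HasDerivAt (fun w ↦ c / ((s : ℂ) - w)) (c * (((s : ℂ) - z)⁻¹ * ((s : ℂ) - z)⁻¹)) z := by
  have hne := ofReal_sub_ne_zero hz s
  refine ((((hasDerivAt_id z).const_sub (s : ℂ)).inv hne).const_mul c).congr_deriv ?_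
  simp only [id_eq]
  field_simp

lemma differentiableOn_cauchyTransform (hf : Integrable f μ) :
    DifferentiableOn ℂ (cauchyTransform μ f) {z | z.im ≠ 0} := by
  intro z (hz : z.im ≠ 0)
  refine (DifferentiableAt.const_mul ?_ _).differentiableWithinAt
  have hpos : 0 < |z.im| / 2 := by positivity
  have hnhds : {w : ℂ | |z.im| / 2 < |w.im|} ∈ 𝓝 z :=
    (isOpen_lt continuous_const (by fun_prop)).mem_nhds (half_lt_self (abs_pos.2 hz))
  have hne {w : ℂ} (hw : |z.im| / 2 < |w.im|) : w.im ≠ 0 := abs_pos.1 (hpos.trans hw)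
  have hcont := continuous_inv_ofReal_sub hz
  refine (hasDerivAt_integral_of_dominated_loc_of_deriv_le (𝕜 := ℂ)
    (bound := fun s ↦ ‖f s‖ * ((|z.im| / 2)⁻¹ * (|z.im| / 2)⁻¹)) hnhds ?_
    (integrable_div_ofReal_sub hf hz) (hf.1.mul (hcont.mul hcont).aestronglyMeasurable) ?_
    (hf.norm.mul_const _)
    (.of_forall fun s w hw ↦ hasDerivAt_div_ofReal_sub (hne hw) s _)).2.differentiableAt
  · filter_upwards [hnhds] with w hw using (integrable_div_ofReal_sub hf (hne hw)).1
  · refine .of_forall fun s w (hw : |z.im| / 2 < |w.im|) ↦ ?_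
    have hle : ‖((s : ℂ) - w)⁻¹‖ ≤ (|z.im| / 2)⁻¹ :=
      (norm_inv_ofReal_sub_le (hne hw) s).trans (inv_anti₀ hpos hw.le)
    rw [norm_mul, norm_mul]
    gcongr

lemma differentiableOn_cauchyTransform_upperHalfPlane (hf : Integrable f μ) :
    DifferentiableOn ℂ (cauchyTransform μ f) {z | 0 < z.im} :=
  (differentiableOn_cauchyTransform hf).mono fun _ hz ↦ ne_of_gt hz

lemma continuous_cauchyTransform_slice (hf : Integrable f μ) {δ : ℝ} (hδ : δ ≠ 0) :
    Continuous fun x : ℝ ↦ cauchyTransform μ f (x + δ * Complex.I) :=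
  (differentiableOn_cauchyTransform hf).continuousOn.comp_continuous (by fun_prop)
    fun x ↦ by simpa using hδ

lemma cauchyTransform_add (hf : Integrable f μ) (hg : Integrable g μ) (hz : z.im ≠ 0) :
    cauchyTransform μ (f + g) z = cauchyTransform μ f z + cauchyTransform μ g z := by
  simp only [cauchyTransform, Pi.add_apply, add_div]
  rw [integral_add (integrable_div_ofReal_sub hf hz) (integrable_div_ofReal_sub hg hz), mul_add]

lemma cauchyTransform_const_mul (c : ℂ) (f : ℝ → ℂ) (z : ℂ) :
    cauchyTransform μ (fun s ↦ c * f s) z = c * cauchyTransform μ f z := by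
  simp_rw [cauchyTransform, mul_div_assoc]
  rw [integral_const_mul, mul_left_comm]

lemma cauchyTransform_sub (hf : Integrable f μ) (hg : Integrable g μ) (hz : z.im ≠ 0) :
    cauchyTransform μ (f - g) z = cauchyTransform μ f z - cauchyTransform μ g z := by
  simp only [cauchyTransform, Pi.sub_apply, sub_div]
  rw [integral_sub (integrable_div_ofReal_sub hf hz) (integrable_div_ofReal_sub hg hz), mul_sub]

lemma cauchyTransform_conj (f : ℝ → ℂ) (z : ℂ) :
    cauchyTransform μ (fun s ↦ (starRingEnd ℂ) (f s)) ((starRingEnd ℂ) z) =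
      (starRingEnd ℂ) (cauchyTransform μ f z) := by
  simp [cauchyTransform, ← integral_conj]

lemma im_cauchyTransform_ofReal {r : ℝ → ℝ} (hr : Integrable r μ) (hz : 0 < z.im) :
    (cauchyTransform μ (fun s ↦ (r s : ℂ)) z).im =
      Real.pi⁻¹ * ∫ s, r s * poissonKernel z.im (s - z.re) ∂μ := by
  rw [cauchyTransform, ← Complex.ofReal_inv, Complex.im_ofReal_mul]
  congr 1
  refine (integral_im (integrable_div_ofReal_sub hr.ofReal hz.ne')).symm.trans
    (integral_congr_ae (.of_forall fun s ↦ ?_))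
  simp only [RCLike.im_to_complex, Complex.coe_algebraMap, Complex.div_im, poissonKernel]
  simp [Complex.normSq_apply]
  ring

lemma im_cauchyTransform_nonneg {r : ℝ → ℝ} (hr : Integrable r μ) (hr₀ : 0 ≤ r) (hz : 0 < z.im) :
    0 ≤ (cauchyTransform μ (fun s ↦ (r s : ℂ)) z).im := by
  rw [im_cauchyTransform_ofReal hr hz]
  exact mul_nonneg (by positivity)
    (integral_nonneg fun s ↦ mul_nonneg (hr₀ s) (poissonKernel_pos hz _).le)

end CauchyTransform

/-! ### Kolmogorov's estimate -/

lemma μI_le_volume : μI ≤ volume := Measure.restrict_le_self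

instance : IsFiniteMeasure μI := inferInstanceAs (IsFiniteMeasure (volume.restrict _))

lemma μI_univ : μI univ = 2 := by
  rw [μI, Measure.restrict_apply_univ, Real.volume_Ioo]
  norm_num

/-- On `(-1, 1)` twice the Poisson kernel of the point `i` is at least `1`. -/
lemma lintegral_ofReal_re_le {U : ℂ → ℂ} {M : ℝ} (hU : DiffContOnCl ℂ U {z | 0 < z.im})
    (hM : ∀ z : ℂ, 0 ≤ z.im → ‖U z‖ ≤ M) (hre : ∀ z : ℂ, 0 ≤ z.im → 0 ≤ (U z).re) :
    ∫⁻ s : ℝ, ENNReal.ofReal (U s).re ∂μI ≤ ENNReal.ofReal (2 * (Real.pi * (U Complex.I).re)) := by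
  have hslice : Continuous fun s : ℝ ↦ U s :=
    hU.continuousOn.comp_continuous (by fun_prop) fun s ↦ by simp
  have hPU : Integrable fun s : ℝ ↦ (poissonKernel 1 s : ℂ) * U s := by
    simpa using (integrable_ofReal_poissonKernel one_pos 0).mul_bdd hslice.aestronglyMeasurable
      (.of_forall fun s ↦ hM s (by simp))
  have hPre : Integrable fun s : ℝ ↦ poissonKernel 1 s * (U s).re := by
    simpa using hPU.re
  have hformula : ∫ s : ℝ, poissonKernel 1 s * (U s).re = Real.pi * (U Complex.I).re := by
    have h := integral_poissonKernel_mul hU hM (z := Complex.I) (by simp)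
    simp only [Complex.I_im, Complex.I_re, sub_zero] at h
    rw [← Complex.re_ofReal_mul, ← h]
    simpa using integral_re hPU
  have hnonneg (s : ℝ) : 0 ≤ (U s).re := hre s (by simp)
  rw [← hformula, ← integral_const_mul, ofReal_integral_eq_lintegral_ofReal (hPre.const_mul 2)
    (.of_forall fun s ↦ mul_nonneg zero_le_two
      (mul_nonneg (poissonKernel_pos one_pos s).le (hnonneg s)))]
  refine (setLIntegral_mono' measurableSet_Ioo fun s hs ↦ ENNReal.ofReal_le_ofReal ?_).trans
    (setLIntegral_le_lintegral _ _)
  have hP : 1 ≤ 2 * poissonKernel 1 s := by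
    rw [poissonKernel, mul_one_div, one_le_div (by positivity)]
    nlinarith [hs.1, hs.2]
  nlinarith [hnonneg s]

/-- The function `log (1 + ‖w‖²)`, in terms of which the weak-type bound for the Cauchy transform is
stated. -/
def logGauge (w : ℂ) : ℝ≥0∞ := ENNReal.ofReal (Real.log (1 + ‖w‖ ^ 2))

lemma continuous_logGauge : Continuous logGauge :=
  ENNReal.continuous_ofReal.comp <|
    ((continuous_norm.pow 2).const_add 1).log fun w ↦ (by positivity : 0 < 1 + ‖w‖ ^ 2).ne'

lemma logGauge_le_logGauge {v w : ℂ} (h : ‖v‖ ≤ ‖w‖) : logGauge v ≤ logGauge w := by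
  unfold logGauge
  gcongr

lemma logGauge_add_le (v w : ℂ) : logGauge (v + w) ≤ 2 * logGauge v + 2 * logGauge w := by
  have hlog (a : ℂ) : 0 ≤ Real.log (1 + ‖a‖ ^ 2) := Real.log_nonneg (by simp)
  have hv := hlog v
  have hw := hlog w
  rw [logGauge, logGauge, logGauge, ← ENNReal.ofReal_ofNat, ← ENNReal.ofReal_mul zero_le_two,
    ← ENNReal.ofReal_mul zero_le_two, ← ENNReal.ofReal_add (by positivity) (by positivity)]
  refine ENNReal.ofReal_le_ofReal ?_
  rw [← mul_add, ← Real.log_mul (by positivity) (by positivity), ← Real.log_rpow (by positivity),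
    Real.rpow_two]
  refine Real.log_le_log (by positivity) ?_
  calc 1 + ‖v + w‖ ^ 2 ≤ 1 + (‖v‖ + ‖w‖) ^ 2 := by gcongr; exact norm_add_le v w
    _ ≤ ((1 + ‖v‖ ^ 2) * (1 + ‖w‖ ^ 2)) ^ 2 := by
      nlinarith [sq_nonneg (‖v‖ - ‖w‖), sq_nonneg (‖v‖ * ‖w‖), sq_nonneg (‖v‖ ^ 2 + ‖w‖ ^ 2),
        sq_nonneg ‖v‖, sq_nonneg ‖w‖, sq_nonneg (‖v‖ ^ 2 + ‖w‖ ^ 2 + ‖v‖ ^ 2 * ‖w‖ ^ 2)]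

lemma logGauge_sub_le (v w : ℂ) : logGauge (v - w) ≤ 2 * logGauge v + 2 * logGauge w := by
  have hneg : logGauge (-w) = logGauge w := by simp [logGauge]
  simpa only [sub_eq_add_neg, hneg] using logGauge_add_le v (-w)

section LogOneSubIMul

variable {w : ℂ}

lemma one_le_re_one_sub_I_mul (hw : 0 ≤ w.im) : 1 ≤ (1 - Complex.I * w).re := by
  simpa using hw

lemma one_le_norm_one_sub_I_mul (hw : 0 ≤ w.im) : 1 ≤ ‖1 - Complex.I * w‖ :=
  (one_le_re_one_sub_I_mul hw).trans (Complex.re_le_norm _)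

lemma re_log_one_sub_I_mul_nonneg (hw : 0 ≤ w.im) : 0 ≤ (Complex.log (1 - Complex.I * w)).re := by
  rw [Complex.log_re]
  exact Real.log_nonneg (one_le_norm_one_sub_I_mul hw)

lemma re_log_one_sub_I_mul_le (hw : 0 ≤ w.im) : (Complex.log (1 - Complex.I * w)).re ≤ ‖w‖ := by
  rw [Complex.log_re]
  have hlog := Real.log_le_sub_one_of_pos (zero_lt_one.trans_le (one_le_norm_one_sub_I_mul hw))
  have hnorm : ‖1 - Complex.I * w‖ ≤ 1 + ‖w‖ := (norm_sub_le _ _).trans (by simp)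
  linarith

lemma norm_log_one_sub_I_mul_le (hw : 0 ≤ w.im) :
    ‖Complex.log (1 - Complex.I * w)‖ ≤ ‖w‖ + Real.pi := by
  refine (Complex.norm_le_abs_re_add_abs_im _).trans (add_le_add ?_ ?_)
  · rw [abs_of_nonneg (re_log_one_sub_I_mul_nonneg hw)]
    exact re_log_one_sub_I_mul_le hw
  · rw [Complex.log_im]
    exact Complex.abs_arg_le_pi _

lemma logGauge_le_re_log_one_sub_I_mul (hw : 0 ≤ w.im) :
    logGauge w ≤ 2 * ENNReal.ofReal (Complex.log (1 - Complex.I * w)).re := by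
  rw [logGauge, ← ENNReal.ofReal_ofNat, ← ENNReal.ofReal_mul zero_le_two, Complex.log_re,
    ← Real.log_rpow (zero_lt_one.trans_le (one_le_norm_one_sub_I_mul hw)), Real.rpow_two]
  refine ENNReal.ofReal_le_ofReal (Real.log_le_log (by positivity) ?_)
  rw [← Complex.normSq_eq_norm_sq, ← Complex.normSq_eq_norm_sq]
  simp only [Complex.normSq_apply, Complex.sub_re, Complex.sub_im, Complex.mul_re, Complex.mul_im,
    Complex.I_re, Complex.I_im, Complex.one_re, Complex.one_im]
  nlinarith

end LogOneSubIMul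

lemma norm_cauchyTransform_add_const_le {μ : Measure ℝ} {f : ℝ → ℂ} (hf : Integrable f μ) {δ : ℝ}
    (hδ : 0 < δ) {z : ℂ} (hz : 0 ≤ z.im) :
    ‖cauchyTransform μ f (z + δ * Complex.I)‖ ≤ Real.pi⁻¹ * (δ⁻¹ * ∫ s, ‖f s‖ ∂μ) := by
  have him : (z + δ * Complex.I).im = z.im + δ := by simp
  refine (norm_cauchyTransform_le hf (by rw [him]; positivity)).trans ?_
  rw [him, abs_of_pos (by positivity)]
  gcongr
  exact le_add_of_nonneg_left hz

/-- Apply the Poisson formula to the logarithm of `1 - i F`, which has nonnegative real part because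
`F` maps the upper half-plane into its closure. -/
lemma lintegral_logGauge_le {F : ℂ → ℂ} {M : ℝ} (hF : DiffContOnCl ℂ F {z | 0 < z.im})
    (hM : ∀ z : ℂ, 0 ≤ z.im → ‖F z‖ ≤ M) (him : ∀ z : ℂ, 0 ≤ z.im → 0 ≤ (F z).im) :
    ∫⁻ x : ℝ, logGauge (F x) ∂μI ≤ ENNReal.ofReal (4 * (Real.pi * ‖F Complex.I‖)) := by
  have hslit (z : ℂ) (hz : 0 ≤ z.im) : 1 - Complex.I * F z ∈ Complex.slitPlane :=
    .inl (zero_lt_one.trans_le (one_le_re_one_sub_I_mul (him z hz)))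
  have hlog : DiffContOnCl ℂ (fun z ↦ Complex.log (1 - Complex.I * F z)) {z | 0 < z.im} :=
    ⟨((hF.differentiableOn.const_mul _).const_sub _).clog fun z (hz : 0 < z.im) ↦ hslit z hz.le,
      (continuousOn_const.sub (continuousOn_const.mul hF.continuousOn)).clog fun z hz ↦
        hslit z (by rwa [closure_upperHalfPlane] at hz)⟩
  calc ∫⁻ x : ℝ, logGauge (F x) ∂μI
      ≤ ∫⁻ x : ℝ, 2 * ENNReal.ofReal (Complex.log (1 - Complex.I * F x)).re ∂μI :=
        lintegral_mono fun x ↦ logGauge_le_re_log_one_sub_I_mul (him x (by simp))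
    _ = 2 * ∫⁻ x : ℝ, ENNReal.ofReal (Complex.log (1 - Complex.I * F x)).re ∂μI :=
        lintegral_const_mul' _ _ ENNReal.ofNat_ne_top
    _ ≤ 2 * ENNReal.ofReal (2 * (Real.pi * ‖F Complex.I‖)) := by
        gcongr
        refine (lintegral_ofReal_re_le hlog (M := M + Real.pi) (fun z hz ↦
          (norm_log_one_sub_I_mul_le (him z hz)).trans (by gcongr; exact hM z hz))
          fun z hz ↦ re_log_one_sub_I_mul_nonneg (him z hz)).trans ?_
        gcongr
        exact re_log_one_sub_I_mul_le (him _ (by simp))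
    _ = ENNReal.ofReal (4 * (Real.pi * ‖F Complex.I‖)) := by
        rw [← ENNReal.ofReal_ofNat, ← ENNReal.ofReal_mul zero_le_two, ← mul_assoc]
        norm_num

section CauchyTransform

variable {μ : Measure ℝ} {f : ℝ → ℂ} {r : ℝ → ℝ} {z : ℂ} {δ : ℝ}

lemma integrable_ofReal (hr : Integrable r μ) : Integrable (fun s ↦ (r s : ℂ)) μ := hr.ofReal

lemma lintegral_logGauge_cauchyTransform_le_of_nonneg (hr : Integrable r μ) (hr₀ : 0 ≤ r)
    (hδ : 0 < δ) :
    ∫⁻ x : ℝ, logGauge (cauchyTransform μ (fun s ↦ (r s : ℂ)) (x + δ * Complex.I)) ∂μI ≤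
      ENNReal.ofReal (4 * ∫ s, r s ∂μ) := by
  have hr' := integrable_ofReal hr
  have hnorm : ∫ s, ‖(r s : ℂ)‖ ∂μ = ∫ s, r s ∂μ := by
    simp only [Complex.norm_real, Real.norm_of_nonneg (hr₀ _)]
  refine (lintegral_logGauge_le
    (diffContOnCl_comp_add_const (differentiableOn_cauchyTransform_upperHalfPlane hr') hδ)
    (fun z hz ↦ norm_cauchyTransform_add_const_le hr' hδ hz)
    fun z hz ↦ im_cauchyTransform_nonneg hr hr₀ ?_).trans ?_
  · simpa using by positivity
  have hI : ‖cauchyTransform μ (fun s ↦ (r s : ℂ)) (Complex.I + δ * Complex.I)‖ ≤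
      Real.pi⁻¹ * ∫ s, r s ∂μ := by
    have h := norm_cauchyTransform_add_const_le hr' one_pos (z := δ * Complex.I)
      (by simpa using hδ.le)
    rwa [hnorm, inv_one, one_mul, Complex.ofReal_one, one_mul, add_comm] at h
  calc ENNReal.ofReal (4 * (Real.pi * ‖cauchyTransform μ _ (Complex.I + δ * Complex.I)‖))
      ≤ ENNReal.ofReal (4 * (Real.pi * (Real.pi⁻¹ * ∫ s, r s ∂μ))) := by gcongr
    _ = ENNReal.ofReal (4 * ∫ s, r s ∂μ) := by rw [mul_inv_cancel_left₀ Real.pi_ne_zero]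

lemma cauchyTransform_eq_posPart_sub_negPart (hr : Integrable r μ) (hz : z.im ≠ 0) :
    cauchyTransform μ (fun s ↦ (r s : ℂ)) z =
      cauchyTransform μ (fun s ↦ (max (r s) 0 : ℝ)) z -
        cauchyTransform μ (fun s ↦ (max (-r s) 0 : ℝ)) z := by
  refine Eq.trans ?_ (cauchyTransform_sub (integrable_ofReal hr.pos_part)
    (integrable_ofReal hr.neg_part) hz)
  congr 1 with s
  simp [← Complex.ofReal_sub]

lemma cauchyTransform_eq_re_add_im (hf : Integrable f μ) (hz : z.im ≠ 0) :
    cauchyTransform μ f z =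
      cauchyTransform μ (fun s ↦ ((f s).re : ℂ)) z +
        Complex.I * cauchyTransform μ (fun s ↦ ((f s).im : ℂ)) z := by
  rw [← cauchyTransform_const_mul]
  refine Eq.trans ?_ (cauchyTransform_add (integrable_ofReal hf.re)
    ((integrable_ofReal hf.im).const_mul Complex.I) hz)
  congr 1 with s
  simpa [mul_comm] using (Complex.re_add_im (f s)).symm

lemma lintegral_two_mul_logGauge_add {u : ℝ → ℂ} (hu : Continuous u) (v : ℝ → ℂ) :
    ∫⁻ x, (2 * logGauge (u x) + 2 * logGauge (v x)) ∂μ =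
      2 * ∫⁻ x, logGauge (u x) ∂μ + 2 * ∫⁻ x, logGauge (v x) ∂μ := by
  rw [lintegral_add_left, lintegral_const_mul' _ _ ENNReal.ofNat_ne_top,
    lintegral_const_mul' _ _ ENNReal.ofNat_ne_top]
  exact (continuous_logGauge.comp hu).measurable.const_mul _

lemma lintegral_logGauge_cauchyTransform_ofReal_le (hr : Integrable r μ) (hδ : 0 < δ) :
    ∫⁻ x : ℝ, logGauge (cauchyTransform μ (fun s ↦ (r s : ℂ)) (x + δ * Complex.I)) ∂μI ≤
      ENNReal.ofReal (8 * ∫ s, |r s| ∂μ) := by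
  have him (x : ℝ) : ((x : ℂ) + δ * Complex.I).im ≠ 0 := by simpa using hδ.ne'
  have hpos := lintegral_logGauge_cauchyTransform_le_of_nonneg hr.pos_part
    (fun s ↦ le_max_right _ _) hδ
  have hneg := lintegral_logGauge_cauchyTransform_le_of_nonneg hr.neg_part
    (fun s ↦ le_max_right _ _) hδ
  have hsum : ∫ s, |r s| ∂μ = ∫ s, max (r s) 0 ∂μ + ∫ s, max (-r s) 0 ∂μ := by
    rw [← integral_add hr.pos_part hr.neg_part]
    simp only [← posPart_add_negPart, posPart_def, negPart_def]
  calc _ ≤ ∫⁻ x : ℝ,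
        (2 * logGauge (cauchyTransform μ (fun s ↦ (max (r s) 0 : ℝ)) (x + δ * Complex.I)) +
        2 * logGauge (cauchyTransform μ (fun s ↦ (max (-r s) 0 : ℝ)) (x + δ * Complex.I))) ∂μI :=
        lintegral_mono fun x ↦ by
          rw [cauchyTransform_eq_posPart_sub_negPart hr (him x)]
          exact logGauge_sub_le _ _
    _ ≤ 2 * ENNReal.ofReal (4 * ∫ s, max (r s) 0 ∂μ) +
        2 * ENNReal.ofReal (4 * ∫ s, max (-r s) 0 ∂μ) := by
        rw [lintegral_two_mul_logGauge_add
          (continuous_cauchyTransform_slice (integrable_ofReal hr.pos_part) hδ.ne')]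
        gcongr
    _ = ENNReal.ofReal (8 * ∫ s, |r s| ∂μ) := by
        rw [← mul_add, ← ENNReal.ofReal_add (by positivity) (by positivity), hsum,
          ← ENNReal.ofReal_ofNat, ← ENNReal.ofReal_mul zero_le_two]
        ring_nf

theorem lintegral_logGauge_cauchyTransform_le (hf : Integrable f μ) (hδ : 0 < δ) :
    ∫⁻ x : ℝ, logGauge (cauchyTransform μ f (x + δ * Complex.I)) ∂μI ≤
      ENNReal.ofReal (32 * ∫ s, ‖f s‖ ∂μ) := by
  have him (x : ℝ) : ((x : ℂ) + δ * Complex.I).im ≠ 0 := by simpa using hδ.ne'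
  have hre' : Integrable (fun s ↦ (f s).re) μ := hf.re
  have him' : Integrable (fun s ↦ (f s).im) μ := hf.im
  have hbound {r : ℝ → ℝ} (hr : Integrable r μ) (hle : ∀ s, |r s| ≤ ‖f s‖) :
      ∫⁻ x : ℝ, logGauge (cauchyTransform μ (fun s ↦ (r s : ℂ)) (x + δ * Complex.I)) ∂μI ≤
        ENNReal.ofReal (8 * ∫ s, ‖f s‖ ∂μ) :=
    (lintegral_logGauge_cauchyTransform_ofReal_le hr hδ).trans <| ENNReal.ofReal_le_ofReal <|
      mul_le_mul_of_nonneg_left (integral_mono hr.abs hf.norm hle) (by norm_num)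
  calc _ ≤ ∫⁻ x : ℝ,
        (2 * logGauge (cauchyTransform μ (fun s ↦ ((f s).re : ℂ)) (x + δ * Complex.I)) +
        2 * logGauge (cauchyTransform μ (fun s ↦ ((f s).im : ℂ)) (x + δ * Complex.I))) ∂μI := by
        refine lintegral_mono fun x ↦ ?_
        rw [cauchyTransform_eq_re_add_im hf (him x)]
        refine (logGauge_add_le _ _).trans ?_
        gcongr
        exact logGauge_le_logGauge (by simp)
    _ ≤ 2 * ENNReal.ofReal (8 * ∫ s, ‖f s‖ ∂μ) + 2 * ENNReal.ofReal (8 * ∫ s, ‖f s‖ ∂μ) := by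
        rw [lintegral_two_mul_logGauge_add
          (continuous_cauchyTransform_slice (integrable_ofReal hre') hδ.ne')]
        gcongr
        · exact hbound hre' fun s ↦ Complex.abs_re_le_norm _
        · exact hbound him' fun s ↦ Complex.abs_im_le_norm _
    _ = ENNReal.ofReal (32 * ∫ s, ‖f s‖ ∂μ) := by
        rw [← mul_add, ← ENNReal.ofReal_add (by positivity) (by positivity),
          ← ENNReal.ofReal_ofNat, ← ENNReal.ofReal_mul zero_le_two]
        ring_nf

end CauchyTransform

/-! ### Boundary values -/

lemma tendsto_logGauge_cobounded : Tendsto logGauge (Bornology.cobounded ℂ) (𝓝 ∞) :=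
  ENNReal.tendsto_ofReal_atTop.comp <| Real.tendsto_log_atTop.comp <|
    tendsto_atTop_add_const_left _ 1 <|
      (tendsto_pow_atTop two_ne_zero).comp tendsto_norm_cobounded_atTop

lemma lintegral_liminf_le_of_forall_le {α : Type*} [MeasurableSpace α] {μ : Measure α}
    {u : ℕ → α → ℝ≥0∞} {C : ℝ≥0∞} (hu : ∀ n, Measurable (u n)) (hC : ∀ n, ∫⁻ x, u n x ∂μ ≤ C) :
    ∫⁻ x, liminf (fun n ↦ u n x) atTop ∂μ ≤ C :=
  (lintegral_liminf_le hu).trans <|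
    (liminf_le_liminf (.of_forall hC)).trans_eq (by simp)

lemma lintegral_logGauge_le_of_tendsto {α : Type*} [MeasurableSpace α] {μ : Measure α}
    {u : ℕ → α → ℂ} {v : α → ℂ} {C : ℝ≥0∞} (hu : ∀ n, Measurable (u n))
    (hC : ∀ n, ∫⁻ x, logGauge (u n x) ∂μ ≤ C)
    (hlim : ∀ᵐ x ∂μ, Tendsto (fun n ↦ u n x) atTop (𝓝 (v x))) :
    ∫⁻ x, logGauge (v x) ∂μ ≤ C := by
  refine (lintegral_congr_ae ?_).trans_le (lintegral_liminf_le_of_forall_le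
    (fun n ↦ continuous_logGauge.measurable.comp (hu n)) hC)
  filter_upwards [hlim] with x hx
  exact (((continuous_logGauge.tendsto _).comp hx).liminf_eq).symm

/-- Fatou's theorem applies to `(F + i)⁻¹`, and the bound on `logGauge` prevents its boundary values
from vanishing on a set of positive measure. -/
lemma ae_exists_tendsto_of_lintegral_logGauge_le {μ : Measure ℝ} (hμ : μ ≤ volume) {F : ℂ → ℂ}
    (hF : DifferentiableOn ℂ F {z | 0 < z.im}) (him : ∀ z : ℂ, 0 < z.im → 0 ≤ (F z).im)
    {C : ℝ≥0∞} (hC : C ≠ ∞)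
    (hbound : ∀ δ : ℝ, 0 < δ → ∫⁻ x : ℝ, logGauge (F (x + δ * Complex.I)) ∂μ ≤ C) :
    ∀ᵐ x : ℝ ∂μ, ∃ l, Tendsto (fun δ : ℝ ↦ F (x + δ * Complex.I)) (𝓝[>] 0) (𝓝 l) := by
  have hnorm (z : ℂ) (hz : 0 < z.im) : 1 ≤ ‖F z + Complex.I‖ := one_le_norm_add_I (him z hz)
  have hne (z : ℂ) (hz : 0 < z.im) : F z + Complex.I ≠ 0 :=
    norm_pos_iff.1 (one_pos.trans_le (hnorm z hz))
  have hfatou := ae_exists_tendsto_of_norm_le (U := fun z ↦ (F z + Complex.I)⁻¹) (M := 1)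
    ((hF.add_const _).inv hne) fun z hz ↦ by
      rw [norm_inv]; exact inv_le_one_of_one_le₀ (hnorm z hz)
  obtain ⟨d, -, hd₀, hd⟩ := exists_seq_strictAnti_tendsto_nhdsWithin (0 : ℝ)
  have hmeas (n : ℕ) : Measurable fun x : ℝ ↦ logGauge (F (x + d n * Complex.I)) :=
    (continuous_logGauge.comp (hF.continuousOn.comp_continuous (by fun_prop)
      fun x ↦ by simpa using hd₀ n)).measurable
  have hfinite : ∀ᵐ x : ℝ ∂μ,
      liminf (fun n ↦ logGauge (F (x + d n * Complex.I))) atTop < ∞ :=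
    ae_lt_top (.liminf hmeas) (ne_top_of_le_ne_top hC
      (lintegral_liminf_le_of_forall_le hmeas fun n ↦ hbound _ (hd₀ n)))
  filter_upwards [ae_mono hμ hfatou, hfinite] with x ⟨q, hq⟩ hx
  have hq₀ : q ≠ 0 := by
    rintro rfl
    have hinv : Tendsto (fun n ↦ (F (x + d n * Complex.I) + Complex.I)⁻¹) atTop (𝓝[≠] 0) :=
      tendsto_nhdsWithin_iff.2 ⟨hq.comp hd, .of_forall fun n ↦
        inv_ne_zero (hne _ (by simpa using hd₀ n))⟩
    have hcob := (tendsto_sub_const_cobounded Complex.I).comp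
      (tendsto_inv₀_nhdsNE_zero.comp hinv)
    simp only [Function.comp_def, inv_inv, add_sub_cancel_right] at hcob
    exact hx.ne (tendsto_logGauge_cobounded.comp hcob).liminf_eq
  exact ⟨q⁻¹ - Complex.I, by simpa using (hq.inv₀ hq₀).sub_const Complex.I⟩

section BoundaryValues

variable {μ : Measure ℝ} {f : ℝ → ℂ} {r : ℝ → ℝ}

lemma ae_exists_tendsto_cauchyTransform_of_nonneg (hr : Integrable r μ) (hr₀ : 0 ≤ r) :
    ∀ᵐ x : ℝ ∂μI, ∃ l, Tendsto
      (fun δ : ℝ ↦ cauchyTransform μ (fun s ↦ (r s : ℂ)) (x + δ * Complex.I)) (𝓝[>] 0) (𝓝 l) :=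
  ae_exists_tendsto_of_lintegral_logGauge_le μI_le_volume
    (differentiableOn_cauchyTransform_upperHalfPlane (integrable_ofReal hr))
    (fun _ hz ↦ im_cauchyTransform_nonneg hr hr₀ hz) ENNReal.ofReal_ne_top
    fun _ hδ ↦ lintegral_logGauge_cauchyTransform_le_of_nonneg hr hr₀ hδ

lemma ae_exists_tendsto_cauchyTransform_ofReal (hr : Integrable r μ) :
    ∀ᵐ x : ℝ ∂μI, ∃ l, Tendsto
      (fun δ : ℝ ↦ cauchyTransform μ (fun s ↦ (r s : ℂ)) (x + δ * Complex.I)) (𝓝[>] 0) (𝓝 l) := by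
  filter_upwards [
    ae_exists_tendsto_cauchyTransform_of_nonneg hr.pos_part fun s ↦ le_max_right _ _,
    ae_exists_tendsto_cauchyTransform_of_nonneg hr.neg_part fun s ↦ le_max_right _ _]
    with x ⟨l, hl⟩ ⟨m, hm⟩
  refine ⟨l - m, (hl.sub hm).congr' ?_⟩
  filter_upwards [self_mem_nhdsWithin] with δ (hδ : 0 < δ)
  exact (cauchyTransform_eq_posPart_sub_negPart hr (by simpa using hδ.ne')).symm

theorem ae_exists_tendsto_cauchyTransform (hf : Integrable f μ) :
    ∀ᵐ x : ℝ ∂μI, ∃ l, Tendsto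
      (fun δ : ℝ ↦ cauchyTransform μ f (x + δ * Complex.I)) (𝓝[>] 0) (𝓝 l) := by
  filter_upwards [ae_exists_tendsto_cauchyTransform_ofReal hf.re,
    ae_exists_tendsto_cauchyTransform_ofReal hf.im] with x ⟨l, hl⟩ ⟨m, hm⟩
  refine ⟨l + Complex.I * m, (hl.add (hm.const_mul _)).congr' ?_⟩
  filter_upwards [self_mem_nhdsWithin] with δ (hδ : 0 < δ)
  exact (cauchyTransform_eq_re_add_im hf (by simpa using hδ.ne')).symm

end BoundaryValues

/-! ### Exponential integrability -/

section ExponentialIntegrability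

/-- Apply the Poisson formula to `exp F`, whose real part is at least `cos 1 * exp (re F)`. -/
lemma lintegral_exp_re_le {F : ℂ → ℂ} {M : ℝ} (hF : DiffContOnCl ℂ F {z | 0 < z.im})
    (hM : ∀ z : ℂ, 0 ≤ z.im → ‖F z‖ ≤ M) (him : ∀ z : ℂ, 0 ≤ z.im → |(F z).im| ≤ 1) :
    ∫⁻ x : ℝ, ENNReal.ofReal (Real.exp (F x).re) ∂μI ≤
      ENNReal.ofReal (2 * (Real.pi * Real.exp ‖F Complex.I‖) / Real.cos 1) := by
  have hcos : 0 < Real.cos 1 := Real.cos_one_pos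
  have hre (z : ℂ) (hz : 0 ≤ z.im) :
      Real.exp (F z).re ≤ (Real.cos 1)⁻¹ * (Complex.exp (F z)).re := by
    rw [← div_eq_inv_mul, le_div_iff₀ hcos, Complex.exp_re, ← Real.cos_abs (F z).im]
    gcongr
    exact Real.cos_le_cos_of_nonneg_of_le_pi (abs_nonneg _) (by linarith [Real.pi_gt_three])
      (him z hz)
  have hexp (z : ℂ) : ‖Complex.exp (F z)‖ ≤ Real.exp ‖F z‖ := by
    rw [Complex.norm_exp]
    exact Real.exp_le_exp.2 (Complex.re_le_norm _)
  have hnonneg (z : ℂ) (hz : 0 ≤ z.im) : 0 ≤ (Complex.exp (F z)).re :=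
    (pos_of_mul_pos_right ((Real.exp_pos _).trans_le (hre z hz)) (by positivity)).le
  calc ∫⁻ x : ℝ, ENNReal.ofReal (Real.exp (F x).re) ∂μI
      ≤ ∫⁻ x : ℝ, ENNReal.ofReal (Real.cos 1)⁻¹ * ENNReal.ofReal (Complex.exp (F x)).re ∂μI := by
        refine lintegral_mono fun x ↦ ?_
        rw [← ENNReal.ofReal_mul (by positivity)]
        exact ENNReal.ofReal_le_ofReal (hre x (by simp))
    _ = ENNReal.ofReal (Real.cos 1)⁻¹ * ∫⁻ x : ℝ, ENNReal.ofReal (Complex.exp (F x)).re ∂μI :=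
        lintegral_const_mul' _ _ ENNReal.ofReal_ne_top
    _ ≤ ENNReal.ofReal (Real.cos 1)⁻¹ *
          ENNReal.ofReal (2 * (Real.pi * Real.exp ‖F Complex.I‖)) := by
        gcongr
        refine (lintegral_ofReal_re_le (Complex.differentiable_exp.comp_diffContOnCl hF)
          (fun z hz ↦ (hexp z).trans (Real.exp_le_exp.2 (hM z hz))) hnonneg).trans ?_
        gcongr
        exact (Complex.re_le_norm _).trans (hexp _)
    _ = _ := by rw [← ENNReal.ofReal_mul (by positivity), div_eq_inv_mul]

lemma exp_norm_le_of_abs_im_le_one {w : ℂ} (hw : |w.im| ≤ 1) :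
    Real.exp ‖w‖ ≤ Real.exp 1 * (Real.exp w.re + Real.exp (-w).re) := by
  calc Real.exp ‖w‖ ≤ Real.exp (1 + |w.re|) := by
        gcongr; linarith [Complex.norm_le_abs_re_add_abs_im w]
    _ ≤ Real.exp 1 * (Real.exp w.re + Real.exp (-w).re) := by
        rw [Real.exp_add, Complex.neg_re]
        gcongr
        rcases abs_choice w.re with h | h <;> rw [h] <;>
          linarith [Real.exp_pos w.re, Real.exp_pos (-w.re)]

lemma lintegral_exp_norm_le {F : ℂ → ℂ} {M : ℝ} (hF : DiffContOnCl ℂ F {z | 0 < z.im})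
    (hM : ∀ z : ℂ, 0 ≤ z.im → ‖F z‖ ≤ M) (him : ∀ z : ℂ, 0 ≤ z.im → |(F z).im| ≤ 1) :
    ∫⁻ x : ℝ, ENNReal.ofReal (Real.exp ‖F x‖) ∂μI ≤ ENNReal.ofReal (Real.exp 1) *
      (2 * ENNReal.ofReal (2 * (Real.pi * Real.exp ‖F Complex.I‖) / Real.cos 1)) := by
  have hslice : Continuous fun x : ℝ ↦ F x :=
    hF.continuousOn.comp_continuous (by fun_prop) fun x ↦ by simp
  have hneg := lintegral_exp_re_le hF.neg (fun z hz ↦ by simpa using hM z hz)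
    fun z hz ↦ by simpa using him z hz
  simp only [Pi.neg_apply, norm_neg] at hneg
  calc ∫⁻ x : ℝ, ENNReal.ofReal (Real.exp ‖F x‖) ∂μI
      ≤ ∫⁻ x : ℝ, ENNReal.ofReal (Real.exp 1) * (ENNReal.ofReal (Real.exp (F x).re) +
          ENNReal.ofReal (Real.exp (-F x).re)) ∂μI := by
        refine lintegral_mono fun x ↦ ?_
        rw [← ENNReal.ofReal_add (by positivity) (by positivity),
          ← ENNReal.ofReal_mul (by positivity)]
        exact ENNReal.ofReal_le_ofReal (exp_norm_le_of_abs_im_le_one (him x (by simp)))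
    _ = ENNReal.ofReal (Real.exp 1) * (∫⁻ x : ℝ, ENNReal.ofReal (Real.exp (F x).re) ∂μI +
          ∫⁻ x : ℝ, ENNReal.ofReal (Real.exp (-F x).re) ∂μI) := by
        rw [lintegral_const_mul' _ _ ENNReal.ofReal_ne_top, lintegral_add_left]
        exact ENNReal.measurable_ofReal.comp (Real.measurable_exp.comp
          (Complex.measurable_re.comp hslice.measurable))
    _ ≤ _ := by
        rw [two_mul]
        gcongr
        exact lintegral_exp_re_le hF hM him

variable {θ : ℝ → ℂ} {r : ℝ → ℝ} {δ : ℝ} {z : ℂ}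

lemma norm_cauchyTransform_add_const_le_inv (hθ : AEStronglyMeasurable θ μI)
    (hθ₁ : ∀ s, ‖θ s‖ ≤ 1) (hδ : 0 < δ) (hz : 0 ≤ z.im) :
    ‖cauchyTransform μI θ (z + δ * Complex.I)‖ ≤ δ⁻¹ := by
  have hint : Integrable θ μI := .of_bound hθ 1 (.of_forall hθ₁)
  have hle : ∫ s, ‖θ s‖ ∂μI ≤ 2 := by
    simpa [measureReal_def, μI_univ] using integral_mono hint.norm (integrable_const (1 : ℝ)) hθ₁
  refine (norm_cauchyTransform_add_const_le hint hδ hz).trans ?_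
  rw [inv_mul_le_iff₀ Real.pi_pos, mul_comm Real.pi]
  gcongr
  linarith [Real.pi_gt_three]

lemma abs_im_cauchyTransform_le_one (hr : AEStronglyMeasurable r μI) (hr₁ : ∀ s, |r s| ≤ 1)
    (hz : 0 < z.im) : |(cauchyTransform μI (fun s ↦ (r s : ℂ)) z).im| ≤ 1 := by
  have hP : Integrable (fun s ↦ poissonKernel z.im (s - z.re)) μI :=
    (integrable_poissonKernel hz _).mono_measure μI_le_volume
  rw [im_cauchyTransform_ofReal (.of_bound hr 1 (.of_forall hr₁)) hz, abs_mul,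
    abs_of_pos (by positivity), inv_mul_le_iff₀ Real.pi_pos, mul_one]
  calc |∫ s, r s * poissonKernel z.im (s - z.re) ∂μI|
      ≤ ∫ s, poissonKernel z.im (s - z.re) ∂μI := by
        refine norm_integral_le_of_norm_le (f := fun s ↦ r s * poissonKernel z.im (s - z.re)) hP
          (.of_forall fun s ↦ ?_)
        rw [norm_mul, Real.norm_of_nonneg (poissonKernel_pos hz _).le]
        exact mul_le_of_le_one_left (poissonKernel_pos hz _).le (hr₁ s)
    _ ≤ ∫ s, poissonKernel z.im (s - z.re) :=
        integral_mono_measure μI_le_volume (.of_forall fun s ↦ (poissonKernel_pos hz _).le)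
          (integrable_poissonKernel hz _)
    _ = Real.pi := integral_poissonKernel hz _

lemma lintegral_exp_norm_cauchyTransform_ofReal_le (hr : AEStronglyMeasurable r μI)
    (hr₁ : ∀ s, |r s| ≤ 1) (hδ : 0 < δ) :
    ∫⁻ x : ℝ, ENNReal.ofReal
        (Real.exp ‖cauchyTransform μI (fun s ↦ (r s : ℂ)) (x + δ * Complex.I)‖) ∂μI ≤
      ENNReal.ofReal (Real.exp 1) *
        (2 * ENNReal.ofReal (2 * (Real.pi * Real.exp 1) / Real.cos 1)) := by
  have hr' := integrable_ofReal (.of_bound hr 1 (.of_forall hr₁))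
  have hr₁' (s : ℝ) : ‖(r s : ℂ)‖ ≤ 1 := by simpa using hr₁ s
  have hcos : 0 < Real.cos 1 := Real.cos_one_pos
  refine (lintegral_exp_norm_le
    (diffContOnCl_comp_add_const (differentiableOn_cauchyTransform_upperHalfPlane hr') hδ)
    (fun z hz ↦ norm_cauchyTransform_add_const_le_inv hr'.1 hr₁' hδ hz)
    fun z hz ↦ abs_im_cauchyTransform_le_one hr hr₁ (by simpa using by positivity)).trans ?_
  gcongr
  have h := norm_cauchyTransform_add_const_le_inv hr'.1 hr₁' one_pos (z := δ * Complex.I)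
    (by simpa using hδ.le)
  rwa [inv_one, Complex.ofReal_one, one_mul, add_comm] at h

lemma exists_lintegral_exp_norm_cauchyTransform_le_of_pos :
    ∃ C : ℝ≥0, ∀ θ : ℝ → ℂ, AEStronglyMeasurable θ μI → (∀ s, ‖θ s‖ ≤ 1) → ∀ δ : ℝ, 0 < δ →
      ∫⁻ x : ℝ, ENNReal.ofReal (Real.exp (‖cauchyTransform μI θ (x + δ * Complex.I)‖ / 2)) ∂μI ≤
        C := by
  set K : ℝ≥0∞ := ENNReal.ofReal (Real.exp 1) *
    (2 * ENNReal.ofReal (2 * (Real.pi * Real.exp 1) / Real.cos 1))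
  have hfin : K + K ≠ ∞ := by finiteness
  refine ⟨(K + K).toNNReal, fun θ hθ hθ₁ δ hδ ↦ ?_⟩
  rw [ENNReal.coe_toNNReal hfin]
  have hint : Integrable θ μI := .of_bound hθ 1 (.of_forall hθ₁)
  set A := fun x : ℝ ↦ cauchyTransform μI (fun s ↦ ((θ s).re : ℂ)) (x + δ * Complex.I)
  set B := fun x : ℝ ↦ cauchyTransform μI (fun s ↦ ((θ s).im : ℂ)) (x + δ * Complex.I)
  have hA : Continuous A := continuous_cauchyTransform_slice (integrable_ofReal hint.re) hδ.ne'
  calc _ ≤ ∫⁻ x : ℝ, (ENNReal.ofReal (Real.exp ‖A x‖) + ENNReal.ofReal (Real.exp ‖B x‖)) ∂μI := by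
        refine lintegral_mono fun x ↦ ?_
        rw [cauchyTransform_eq_re_add_im hint (by simpa using hδ.ne'),
          ← ENNReal.ofReal_add (by positivity) (by positivity)]
        refine ENNReal.ofReal_le_ofReal ?_
        have hnorm : ‖A x + Complex.I * B x‖ ≤ ‖A x‖ + ‖B x‖ := (norm_add_le _ _).trans (by simp)
        have hexpA := Real.exp_pos ‖A x‖
        have hexpB := Real.exp_pos ‖B x‖
        rcases le_total ‖A x‖ ‖B x‖ with h | h
        · linarith [Real.exp_le_exp.2 (by linarith : ‖A x + Complex.I * B x‖ / 2 ≤ ‖B x‖)]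
        · linarith [Real.exp_le_exp.2 (by linarith : ‖A x + Complex.I * B x‖ / 2 ≤ ‖A x‖)]
    _ ≤ K + K := by
        rw [lintegral_add_left (by fun_prop)]
        gcongr
        · exact lintegral_exp_norm_cauchyTransform_ofReal_le hint.re.1
            (fun s ↦ (Complex.abs_re_le_norm _).trans (hθ₁ s)) hδ
        · exact lintegral_exp_norm_cauchyTransform_ofReal_le hint.im.1
            (fun s ↦ (Complex.abs_im_le_norm _).trans (hθ₁ s)) hδ

theorem exists_lintegral_exp_norm_cauchyTransform_le :
    ∃ C : ℝ≥0, ∀ θ : ℝ → ℂ, AEStronglyMeasurable θ μI → (∀ s, ‖θ s‖ ≤ 1) → ∀ δ : ℝ, δ ≠ 0 →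
      ∫⁻ x : ℝ, ENNReal.ofReal (Real.exp (‖cauchyTransform μI θ (x + δ * Complex.I)‖ / 2)) ∂μI ≤
        C := by
  obtain ⟨C, hC⟩ := exists_lintegral_exp_norm_cauchyTransform_le_of_pos
  refine ⟨C, fun θ hθ hθ₁ δ hδ ↦ ?_⟩
  rcases hδ.lt_or_gt with hδ | hδ
  · convert hC (fun s ↦ (starRingEnd ℂ) (θ s))
      (Complex.continuous_conj.comp_aestronglyMeasurable hθ) (by simpa using hθ₁) (-δ)
      (neg_pos.2 hδ) using 5 with x
    rw [← Complex.norm_conj, ← cauchyTransform_conj]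
    simp
  · exact hC θ hθ hθ₁ δ hδ

end ExponentialIntegrability

/-! ### The Sokhotski–Plemelj formulas -/

/-- The Hilbert transform of the measure `f μ` truncated at distance `ε` from the singularity, so
that `FHT f t` is the limit of `truncatedHilbert μI f t ε` as `ε → 0⁺`. -/
def truncatedHilbert (μ : Measure ℝ) (f : ℝ → ℂ) (t ε : ℝ) : ℂ :=
  (Real.pi : ℂ)⁻¹ * ∫ s in {s | ε ≤ |s - t|}, f s / ((s : ℂ) - t) ∂μ

/-- The difference of the truncated kernel `u⁻¹` and the conjugate Poisson kernel. It is odd and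
bounded by the Poisson kernel, which makes it negligible at Lebesgue points. -/
def plemeljKernel (ε u : ℝ) : ℝ := {v : ℝ | ε ≤ |v|}.indicator (·⁻¹) u - u / (u ^ 2 + ε ^ 2)

section Plemelj

variable {μ : Measure ℝ} {f : ℝ → ℂ} {t ε : ℝ}

lemma measurableSet_le_abs_sub (t ε : ℝ) : MeasurableSet {s : ℝ | ε ≤ |s - t|} :=
  measurableSet_le measurable_const (by fun_prop)

lemma FHT_eq_limUnder (f : ℝ → ℂ) (t : ℝ) :
    FHT f t = limUnder (𝓝[>] 0) (truncatedHilbert μI f t) := by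
  unfold FHT truncatedHilbert μI
  congr! 4 with ε
  rw [Measure.restrict_restrict (measurableSet_le_abs_sub t ε), inter_comm]
  rfl

lemma truncatedHilbert_conj (f : ℝ → ℂ) (t ε : ℝ) :
    truncatedHilbert μ (fun s ↦ (starRingEnd ℂ) (f s)) t ε =
      (starRingEnd ℂ) (truncatedHilbert μ f t ε) := by
  simp [truncatedHilbert, ← integral_conj]

lemma measurable_plemeljKernel (ε : ℝ) : Measurable (plemeljKernel ε) :=
  (measurable_inv.indicator (measurableSet_le measurable_const (by fun_prop))).sub (by fun_prop)

lemma plemeljKernel_neg (ε u : ℝ) : plemeljKernel ε (-u) = -plemeljKernel ε u := by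
  simp only [plemeljKernel, indicator, mem_ofPred_eq, abs_neg, neg_sq, inv_neg, neg_div]
  split_ifs <;> ring

lemma abs_plemeljKernel_le (hε : 0 < ε) (u : ℝ) : |plemeljKernel ε u| ≤ poissonKernel ε u := by
  have hden : 0 < u ^ 2 + ε ^ 2 := by positivity
  rw [plemeljKernel, poissonKernel, indicator]
  split_ifs with hu
  · have hpos : 0 < |u| := hε.trans_le hu
    have hu₀ : u ≠ 0 := abs_pos.1 hpos
    have hdiff : u⁻¹ - u / (u ^ 2 + ε ^ 2) = ε * ε / (u * (u ^ 2 + ε ^ 2)) := by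
      field_simp
      ring
    rw [hdiff, abs_div, abs_mul u, abs_of_pos hden, abs_of_pos (mul_pos hε hε),
      div_le_div_iff₀ (by positivity) hden]
    calc ε * ε * (u ^ 2 + ε ^ 2) ≤ ε * |u| * (u ^ 2 + ε ^ 2) := by gcongr; exact hu
      _ = ε * (|u| * (u ^ 2 + ε ^ 2)) := mul_assoc _ _ _
  · rw [zero_sub, abs_neg, abs_div, abs_of_pos hden]
    gcongr
    exact (not_le.1 hu).le

lemma integrable_plemeljKernel (hε : 0 < ε) (t : ℝ) :
    Integrable fun s ↦ plemeljKernel ε (s - t) :=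
  (integrable_poissonKernel hε t).mono'
    ((measurable_plemeljKernel ε).comp (measurable_id.sub_const t)).aestronglyMeasurable
    (.of_forall fun _ ↦ abs_plemeljKernel_le hε _)

lemma integral_plemeljKernel (ε t : ℝ) : ∫ s, plemeljKernel ε (s - t) = 0 := by
  rw [integral_sub_right_eq_self (plemeljKernel ε) t]
  have hneg := integral_neg_eq_self (plemeljKernel ε) volume
  simp only [plemeljKernel_neg, integral_neg] at hneg
  linarith

lemma integrable_plemeljKernel_mul (hf : Integrable f μ) (hε : 0 < ε) (t : ℝ) :
    Integrable (fun s ↦ (plemeljKernel ε (s - t) : ℂ) * f s) μ :=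
  hf.bdd_mul (Complex.measurable_ofReal.comp
      ((measurable_plemeljKernel ε).comp (measurable_id.sub_const t))).aestronglyMeasurable
    (.of_forall fun s ↦ by
      rw [Complex.norm_real]
      exact (abs_plemeljKernel_le hε _).trans (poissonKernel_le_inv hε _))

lemma integrable_poissonKernel_mul (hf : Integrable f μ) (hε : 0 < ε) (t : ℝ) :
    Integrable (fun s ↦ (poissonKernel ε (s - t) : ℂ) * f s) μ :=
  hf.bdd_mul (Complex.continuous_ofReal.comp
      ((continuous_poissonKernel hε).comp (by fun_prop))).aestronglyMeasurable
    (.of_forall fun s ↦ (norm_poissonKernel hε _).trans_le (poissonKernel_le_inv hε _))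

lemma inv_ofReal_sub_eq (ε u : ℝ) :
    ((u : ℂ) - ε * Complex.I)⁻¹ =
      (u / (u ^ 2 + ε ^ 2) : ℝ) + Complex.I * (poissonKernel ε u : ℂ) := by
  apply Complex.ext <;> simp [-Complex.ofReal_div, Complex.inv_re, Complex.inv_im,
    Complex.normSq_apply, poissonKernel, sq]

lemma truncatedHilbert_sub_cauchyTransform (hf : Integrable f μ) (hε : 0 < ε) (t : ℝ) :
    truncatedHilbert μ f t ε - cauchyTransform μ f (t + ε * Complex.I) =
      (Real.pi : ℂ)⁻¹ * (∫ s, (plemeljKernel ε (s - t) : ℂ) * f s ∂μ -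
        Complex.I * ∫ s, (poissonKernel ε (s - t) : ℂ) * f s ∂μ) := by
  have hC := integrable_div_ofReal_sub hf (z := t + ε * Complex.I) (by simpa using hε.ne')
  have hkernel (s : ℝ) : {s | ε ≤ |s - t|}.indicator (fun s ↦ f s / ((s : ℂ) - t)) s =
      f s / ((s : ℂ) - (t + ε * Complex.I)) + ((plemeljKernel ε (s - t) : ℂ) * f s -
        Complex.I * ((poissonKernel ε (s - t) : ℂ) * f s)) := by
    have hinv := inv_ofReal_sub_eq ε (s - t)
    rw [div_eq_mul_inv, ← sub_sub, ← Complex.ofReal_sub, hinv]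
    simp only [plemeljKernel, indicator, mem_ofPred_eq]
    split_ifs <;> push_cast <;> ring
  rw [truncatedHilbert, cauchyTransform, ← integral_indicator (measurableSet_le_abs_sub t ε),
    ← mul_sub]
  simp_rw [hkernel]
  have hK := integrable_plemeljKernel_mul hf hε t
  have hP := (integrable_poissonKernel_mul hf hε t).const_mul Complex.I
  rw [integral_add hC (by exact hK.sub hP), integral_sub hK hP, integral_const_mul,
    add_sub_cancel_left]

/-- As the kernel has mean zero, `h s` may be replaced by `h s - h x`. -/
lemma ae_tendsto_integral_plemeljKernel_mul {h : ℝ → ℂ} (hh : Integrable h) :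
    ∀ᵐ x, Tendsto (fun ε ↦ ∫ s, (plemeljKernel ε (s - x) : ℂ) * h s) (𝓝[>] 0) (𝓝 0) := by
  filter_upwards [ae_tendsto_integral_poissonKernel_mul_norm_sub hh.locallyIntegrable
    fun x ↦ integrable_poissonKernel_mul hh one_pos x] with x hx
  refine squeeze_zero_norm' ?_ hx
  filter_upwards [self_mem_nhdsWithin] with ε (hε : 0 < ε)
  have hK := integrable_ofReal (integrable_plemeljKernel hε x)
  have hmean : ∫ s, (plemeljKernel ε (s - x) : ℂ) * h s =
      ∫ s, (plemeljKernel ε (s - x) : ℂ) * (h s - h x) := by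
    simp_rw [mul_sub]
    rw [integral_sub (integrable_plemeljKernel_mul hh hε x) (hK.mul_const _), integral_mul_const,
      integral_complex_ofReal, integral_plemeljKernel, Complex.ofReal_zero, zero_mul, sub_zero]
  have hbound : Integrable fun s ↦ poissonKernel ε (s - x) * ‖h s - h x‖ := by
    simpa [mul_sub, ← mul_sub, abs_of_pos (poissonKernel_pos hε _)] using
      ((integrable_poissonKernel_mul hh hε x).sub
        ((integrable_ofReal (integrable_poissonKernel hε x)).mul_const (h x))).norm
  rw [hmean]
  refine norm_integral_le_of_norm_le hbound (.of_forall fun s ↦ ?_)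
  rw [norm_mul, Complex.norm_real]
  gcongr
  exact abs_plemeljKernel_le hε _

lemma integral_mul_indicator_Ioo (k f : ℝ → ℂ) :
    ∫ s, k s * (Ioo (-1) 1).indicator f s = ∫ s, k s * f s ∂μI := by
  rw [μI, ← integral_indicator measurableSet_Ioo]
  congr with s
  exact (indicator_mul_right _ k f).symm

lemma ae_tendsto_truncatedHilbert_sub_cauchyTransform (hf : Integrable f μI) :
    ∀ᵐ x : ℝ ∂μI, Tendsto
      (fun ε : ℝ ↦ truncatedHilbert μI f x ε - cauchyTransform μI f (x + ε * Complex.I)) (𝓝[>] 0)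
      (𝓝 (-(Complex.I * f x))) := by
  set h := (Ioo (-1 : ℝ) 1).indicator f with h_def
  have hh : Integrable h := (integrable_indicator_iff measurableSet_Ioo).2 hf
  filter_upwards [ae_mono μI_le_volume (ae_tendsto_integral_plemeljKernel_mul hh),
    ae_mono μI_le_volume (ae_tendsto_integral_poissonKernel_mul hh.locallyIntegrable
      fun y hy x ↦ integrable_poissonKernel_mul hh hy x), ae_restrict_mem measurableSet_Ioo]
    with x hK hP hx
  have hπ : (Real.pi : ℂ) ≠ 0 := mod_cast Real.pi_ne_zero
  have hlim := (hK.sub (hP.const_mul Complex.I)).const_mul (Real.pi : ℂ)⁻¹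
  rw [h_def, indicator_of_mem hx, zero_sub, mul_neg, mul_left_comm Complex.I,
    inv_mul_cancel_left₀ hπ] at hlim
  refine hlim.congr' ?_
  filter_upwards [self_mem_nhdsWithin] with ε (hε : 0 < ε)
  rw [truncatedHilbert_sub_cauchyTransform hf hε, integral_mul_indicator_Ioo,
    integral_mul_indicator_Ioo]

theorem ae_tendsto_truncatedHilbert (hf : Integrable f μI) :
    ∀ᵐ x : ℝ ∂μI, Tendsto (truncatedHilbert μI f x) (𝓝[>] 0) (𝓝 (FHT f x)) := by
  filter_upwards [ae_tendsto_truncatedHilbert_sub_cauchyTransform hf,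
    ae_exists_tendsto_cauchyTransform hf] with x hsub ⟨l, hl⟩
  have hlim : Tendsto (truncatedHilbert μI f x) (𝓝[>] 0) (𝓝 (-(Complex.I * f x) + l)) := by
    simpa using hsub.add hl
  rw [FHT_eq_limUnder, hlim.limUnder_eq]
  exact hlim

theorem ae_tendsto_cauchyTransform_nhdsGT (hf : Integrable f μI) :
    ∀ᵐ x : ℝ ∂μI, Tendsto (fun δ : ℝ ↦ cauchyTransform μI f (x + δ * Complex.I)) (𝓝[>] 0)
      (𝓝 (FHT f x + Complex.I * f x)) := by
  filter_upwards [ae_tendsto_truncatedHilbert_sub_cauchyTransform hf,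
    ae_tendsto_truncatedHilbert hf] with x hsub hx
  simpa using hx.sub hsub

lemma integrable_conj (hf : Integrable f μ) : Integrable (fun s ↦ (starRingEnd ℂ) (f s)) μ :=
  Complex.conjLIE.toContinuousLinearEquiv.toContinuousLinearMap.integrable_comp hf

lemma FHT_conj (hf : Integrable f μI) :
    FHT (fun s ↦ (starRingEnd ℂ) (f s)) =ᵐ[μI] fun x ↦ (starRingEnd ℂ) (FHT f x) := by
  filter_upwards [ae_tendsto_truncatedHilbert hf, ae_tendsto_truncatedHilbert (integrable_conj hf)]
    with x hx hconj
  exact tendsto_nhds_unique hconj <| ((Complex.continuous_conj.tendsto _).comp hx).congr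
    fun ε ↦ (truncatedHilbert_conj f x ε).symm

theorem ae_tendsto_cauchyTransform_nhdsLT (hf : Integrable f μI) :
    ∀ᵐ x : ℝ ∂μI, Tendsto (fun δ : ℝ ↦ cauchyTransform μI f (x + δ * Complex.I)) (𝓝[<] 0)
      (𝓝 (FHT f x - Complex.I * f x)) := by
  filter_upwards [FHT_conj hf, ae_tendsto_cauchyTransform_nhdsGT (integrable_conj hf)]
    with x hx hlim
  rw [hx] at hlim
  have hneg : Tendsto (fun δ : ℝ ↦ -δ) (𝓝[<] 0) (𝓝[>] 0) := by
    simpa using tendsto_neg_nhdsLT (a := (0 : ℝ))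
  have hconj := (Complex.continuous_conj.tendsto _).comp (hlim.comp hneg)
  simp only [map_add, map_mul, Complex.conj_conj, Complex.conj_I, neg_mul, ← sub_eq_add_neg]
    at hconj
  refine hconj.congr fun δ ↦ ?_
  simp [← cauchyTransform_conj]

lemma aestronglyMeasurable_FHT (hf : Integrable f μI) : AEStronglyMeasurable (FHT f) μI := by
  obtain ⟨d, -, hd₀, hd⟩ := exists_seq_strictAnti_tendsto_nhdsWithin (0 : ℝ)
  refine aestronglyMeasurable_of_tendsto_ae atTop
    (f := fun n (x : ℝ) ↦ cauchyTransform μI f (x + d n * Complex.I) - Complex.I * f x) (fun n ↦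
      (continuous_cauchyTransform_slice hf (hd₀ n).ne').aestronglyMeasurable.sub
        (hf.1.const_mul _)) ?_
  filter_upwards [ae_tendsto_cauchyTransform_nhdsGT hf] with x hx
  simpa using (hx.comp hd).sub_const (Complex.I * f x)

end Plemelj

/-! ### Continuity of the transform along subsequences -/

lemma exists_strictMono_ae_tendsto_zero {α : Type*} [MeasurableSpace α] {μ : Measure α}
    {u : ℕ → α → ℝ≥0∞} (hu : ∀ n, AEMeasurable (u n) μ)
    (h : Tendsto (fun n ↦ ∫⁻ x, u n x ∂μ) atTop (𝓝 0)) :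
    ∃ φ : ℕ → ℕ, StrictMono φ ∧ ∀ᵐ x ∂μ, Tendsto (fun n ↦ u (φ n) x) atTop (𝓝 0) := by
  obtain ⟨φ, hφ, hle⟩ := extraction_forall_of_eventually
    (P := fun k n ↦ ∫⁻ x, u n x ∂μ ≤ (2⁻¹ : ℝ≥0∞) ^ k) fun k ↦
      h.eventually_le_const (ENNReal.pow_pos (by simp) k)
  refine ⟨φ, hφ, ?_⟩
  have hsum : ∫⁻ x, ∑' k, u (φ k) x ∂μ ≠ ∞ := by
    rw [lintegral_tsum fun k ↦ hu (φ k)]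
    refine ne_top_of_le_ne_top ?_ (ENNReal.tsum_le_tsum hle)
    rw [ENNReal.tsum_geometric, ENNReal.one_sub_inv_two, inv_inv]
    exact ENNReal.ofNat_ne_top
  filter_upwards [ae_lt_top' (.tsum fun k ↦ hu (φ k)) hsum] with x hx
  exact ENNReal.tendsto_atTop_zero_of_tsum_ne_top hx.ne

lemma tendsto_zero_of_tendsto_logGauge {ι : Type*} {l : Filter ι} {u : ι → ℂ}
    (h : Tendsto (fun i ↦ logGauge (u i)) l (𝓝 0)) : Tendsto u l (𝓝 0) := by
  have hlog : Tendsto (fun i ↦ Real.log (1 + ‖u i‖ ^ 2)) l (𝓝 0) := by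
    refine ((ENNReal.tendsto_toReal ENNReal.zero_ne_top).comp h).congr fun i ↦ ?_
    exact ENNReal.toReal_ofReal (Real.log_nonneg (by simp))
  have hsq : Tendsto (fun i ↦ ‖u i‖ ^ 2) l (𝓝 0) := by
    have hexp := ((Real.continuous_exp.tendsto _).comp hlog).sub_const 1
    rw [Real.exp_zero, sub_self] at hexp
    refine hexp.congr fun i ↦ ?_
    rw [Function.comp_apply, Real.exp_log (by positivity), add_sub_cancel_left]
  rw [tendsto_zero_iff_norm_tendsto_zero]
  simpa [Function.comp_def] using (Real.continuous_sqrt.tendsto _).comp hsq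

section Approximation

variable {μ : Measure ℝ} {f g : ℝ → ℂ}

lemma FHT_sub (hf : Integrable f μI) (hg : Integrable g μI) :
    FHT (f - g) =ᵐ[μI] FHT f - FHT g := by
  filter_upwards [ae_tendsto_cauchyTransform_nhdsGT hf, ae_tendsto_cauchyTransform_nhdsGT hg,
    ae_tendsto_cauchyTransform_nhdsGT (hf.sub hg)] with x hfx hgx hfg
  have hlim := tendsto_nhds_unique_of_eventuallyEq hfg (hfx.sub hgx) <| by
    filter_upwards [self_mem_nhdsWithin] with δ (hδ : 0 < δ)
    exact cauchyTransform_sub hf hg (by simpa using hδ.ne')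
  simp only [Pi.sub_apply] at hlim ⊢
  linear_combination hlim

lemma lintegral_logGauge_FHT_le (hf : Integrable f μI) :
    ∫⁻ x, logGauge (FHT f x + Complex.I * f x) ∂μI ≤ 32 * ∫⁻ x, ‖f x‖ₑ ∂μI := by
  obtain ⟨d, -, hd₀, hd⟩ := exists_seq_strictAnti_tendsto_nhdsWithin (0 : ℝ)
  have hconst : ENNReal.ofReal (32 * ∫ x, ‖f x‖ ∂μI) = 32 * ∫⁻ x, ‖f x‖ₑ ∂μI := by
    rw [ENNReal.ofReal_mul (by norm_num), ENNReal.ofReal_ofNat,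
      ofReal_integral_norm_eq_lintegral_enorm hf]
  rw [← hconst]
  refine lintegral_logGauge_le_of_tendsto
    (fun n ↦ (continuous_cauchyTransform_slice hf (hd₀ n).ne').measurable)
    (fun n ↦ lintegral_logGauge_cauchyTransform_le hf (hd₀ n)) ?_
  filter_upwards [ae_tendsto_cauchyTransform_nhdsGT hf] with x hx using hx.comp hd

theorem exists_strictMono_ae_tendsto_FHT {F : ℕ → ℝ → ℂ} (hF : ∀ n, Integrable (F n) μI)
    (hf : Integrable f μI) (h : Tendsto (fun n ↦ ∫⁻ x, ‖F n x - f x‖ₑ ∂μI) atTop (𝓝 0)) :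
    ∃ φ : ℕ → ℕ, StrictMono φ ∧
      ∀ᵐ x ∂μI, Tendsto (fun n ↦ FHT (F (φ n)) x) atTop (𝓝 (FHT f x)) := by
  have hsub (n : ℕ) : Integrable (F n - f) μI := (hF n).sub hf
  have hgauge (n : ℕ) : AEMeasurable
      (fun x ↦ logGauge (FHT (F n - f) x + Complex.I * (F n - f) x)) μI :=
    continuous_logGauge.measurable.comp_aemeasurable
      ((aestronglyMeasurable_FHT (hsub n)).aemeasurable.add ((hsub n).1.aemeasurable.const_mul _))
  have hnorm (n : ℕ) : AEMeasurable (fun x ↦ ‖F n x - f x‖ₑ) μI := (hsub n).1.enorm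
  obtain ⟨φ, hφ, hlim⟩ := exists_strictMono_ae_tendsto_zero (fun n ↦ (hgauge n).add (hnorm n)) <| by
    have hzero := (ENNReal.Tendsto.const_mul (a := 32 + 1) h (.inr (by finiteness)))
    rw [mul_zero] at hzero
    refine tendsto_of_tendsto_of_tendsto_of_le_of_le tendsto_const_nhds hzero
      (fun _ ↦ zero_le) fun n ↦ ?_
    simp only [Pi.add_apply]
    rw [lintegral_add_right' _ (hnorm n), add_mul, one_mul]
    gcongr
    exact lintegral_logGauge_FHT_le (hsub n)
  refine ⟨φ, hφ, ?_⟩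
  filter_upwards [hlim, ae_all_iff.2 fun n ↦ FHT_sub (hF n) hf] with x hx hFHT
  simp only [Pi.add_apply, Pi.sub_apply] at hx hFHT
  have hboundary : Tendsto
      (fun n ↦ FHT (F (φ n) - f) x + Complex.I * (F (φ n) x - f x)) atTop (𝓝 0) :=
    tendsto_zero_of_tendsto_logGauge <|
      tendsto_of_tendsto_of_tendsto_of_le_of_le tendsto_const_nhds hx (fun _ ↦ zero_le)
        fun _ ↦ le_self_add
  have hpoint : Tendsto (fun n ↦ F (φ n) x - f x) atTop (𝓝 0) := by
    rw [tendsto_zero_iff_enorm_tendsto_zero]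
    exact tendsto_of_tendsto_of_tendsto_of_le_of_le tendsto_const_nhds hx (fun _ ↦ zero_le)
      fun _ ↦ le_add_self
  simpa [hFHT] using (hboundary.sub (hpoint.const_mul Complex.I)).add_const (FHT f x)

/-- `f` cut off to zero where its norm exceeds `n`. -/
def boundedTruncation (f : ℝ → ℂ) (n : ℕ) : ℝ → ℂ := {s | ‖f s‖ ≤ n}.indicator f

lemma norm_boundedTruncation_le (f : ℝ → ℂ) (n : ℕ) (s : ℝ) : ‖boundedTruncation f n s‖ ≤ ‖f s‖ :=
  norm_indicator_le_norm_self _ _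

lemma norm_boundedTruncation_le_natCast (f : ℝ → ℂ) (n : ℕ) (s : ℝ) :
    ‖boundedTruncation f n s‖ ≤ n := by
  by_cases hs : ‖f s‖ ≤ n <;> simp [boundedTruncation, hs]

lemma tendsto_boundedTruncation (f : ℝ → ℂ) (s : ℝ) :
    Tendsto (fun n ↦ boundedTruncation f n s) atTop (𝓝 (f s)) := by
  refine tendsto_const_nhds.congr' ?_
  filter_upwards [eventually_ge_atTop ⌈‖f s‖⌉₊] with n hn
  simp [boundedTruncation, Nat.ceil_le.1 hn]

lemma integrable_boundedTruncation (hf : Integrable f μ) (n : ℕ) :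
    Integrable (boundedTruncation f n) μ :=
  hf.indicator₀ (nullMeasurableSet_le hf.1.norm.aemeasurable aemeasurable_const)

theorem exists_strictMono_ae_tendsto_FHT_boundedTruncation (hf : Integrable f μI) :
    ∃ φ : ℕ → ℕ, StrictMono φ ∧
      ∀ᵐ x ∂μI, Tendsto (fun n ↦ FHT (boundedTruncation f (φ n)) x) atTop (𝓝 (FHT f x)) := by
  refine exists_strictMono_ae_tendsto_FHT (integrable_boundedTruncation hf) hf ?_
  simpa using tendsto_lintegral_norm_of_dominated_convergence
    (fun n ↦ (integrable_boundedTruncation hf n).1) hf.norm.hasFiniteIntegral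
    (fun n ↦ .of_forall (norm_boundedTruncation_le f n)) (.of_forall (tendsto_boundedTruncation f))

end Approximation

/-! ### Uniform integrability and the Vitali–Hahn–Saks theorem -/

section UniformIntegrability

variable {α β ι : Type*} [MeasurableSpace α] {μ : Measure α} {p : ℝ≥0∞}

lemma unifIntegrable_one_iff [NormedAddCommGroup β] {u : ι → α → β} :
    UnifIntegrable u 1 μ ↔ ∀ ε : ℝ, 0 < ε → ∃ δ : ℝ, 0 < δ ∧ ∀ i s, MeasurableSet s →
      μ s ≤ ENNReal.ofReal δ → ∫⁻ x in s, ‖u i x‖ₑ ∂μ ≤ ENNReal.ofReal ε := by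
  simp only [UnifIntegrable, exists_prop]
  refine forall₂_congr fun ε _ ↦ exists_congr fun δ ↦ and_congr_right fun _ ↦
    forall₃_congr fun i s hs ↦ ?_
  rw [eLpNorm_indicator_eq_eLpNorm_restrict hs, eLpNorm_one_eq_lintegral_enorm]

lemma unifIntegrable_comp {κ : Type*} [NormedAddCommGroup β] {u : ι → α → β}
    (hu : UnifIntegrable u p μ) (φ : κ → ι) : UnifIntegrable (fun k ↦ u (φ k)) p μ := fun _ hε ↦
  let ⟨δ, hδ, h⟩ := hu hε
  ⟨δ, hδ, fun k ↦ h (φ k)⟩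

lemma unifIntegrable_bdd_mul [NormedRing β] {u v : ι → α → β} {C : ℝ}
    (hv : ∀ i x, ‖v i x‖ ≤ C) (hu : UnifIntegrable u p μ) :
    UnifIntegrable (fun i x ↦ v i x * u i x) p μ := by
  intro ε hε
  have hC : 0 < max C 1 := by positivity
  obtain ⟨δ, hδ, h⟩ := hu (div_pos hε hC)
  refine ⟨δ, hδ, fun i s hs hμs ↦ ?_⟩
  calc eLpNorm (s.indicator fun x ↦ v i x * u i x) p μ
      ≤ ENNReal.ofReal (max C 1) * eLpNorm (s.indicator (u i)) p μ := by
        refine eLpNorm_le_mul_eLpNorm_of_ae_le_mul (.of_forall fun x ↦ ?_) p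
        by_cases hx : x ∈ s
        · simp only [indicator_of_mem hx]
          exact (norm_mul_le _ _).trans (by gcongr; exact (hv i x).trans (le_max_left _ _))
        · simp [hx]
    _ ≤ ENNReal.ofReal (max C 1) * ENNReal.ofReal (ε / max C 1) := by gcongr; exact h i s hs hμs
    _ = ENNReal.ofReal ε := by rw [← ENNReal.ofReal_mul hC.le, mul_div_cancel₀ _ hC.ne']

lemma exists_measure_lt_norm_le [IsFiniteMeasure μ] [NormedAddCommGroup β] {w : α → β}
    (hw : AEStronglyMeasurable w μ) {η : ℝ≥0∞} (hη : 0 < η) :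
    ∃ n : ℕ, μ {x | (n : ℝ) < ‖w x‖} ≤ η := by
  have hanti : Antitone fun n : ℕ ↦ {x | (n : ℝ) < ‖w x‖} :=
    fun m n hmn x (hx : (n : ℝ) < ‖w x‖) ↦ (Nat.cast_le.2 hmn).trans_lt hx
  have hempty : ⋂ n : ℕ, {x | (n : ℝ) < ‖w x‖} = ∅ := by
    refine eq_empty_of_forall_notMem fun x hx ↦ ?_
    obtain ⟨n, hn⟩ := exists_nat_ge ‖w x‖
    exact (mem_iInter.1 hx n).not_ge hn
  have hlim := tendsto_measure_iInter_atTop (μ := μ)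
    (fun n ↦ nullMeasurableSet_lt aemeasurable_const hw.norm.aemeasurable) hanti
    ⟨0, measure_ne_top _ _⟩
  rw [hempty, measure_empty] at hlim
  exact (hlim.eventually_le_const hη).exists

lemma memLp_of_unifIntegrable [IsFiniteMeasure μ] [NormedAddCommGroup β] {u : ι → α → β}
    (hu : UnifIntegrable u p μ) {i : ι} (hm : AEStronglyMeasurable (u i) μ) :
    MemLp (u i) p μ := by
  obtain ⟨w, hw, hae⟩ := hm
  refine (memLp_congr_ae hae).2 ?_
  obtain ⟨δ, hδ, h⟩ := hu one_pos
  obtain ⟨n, hn⟩ := exists_measure_lt_norm_le (μ := μ) hw.aestronglyMeasurable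
    (ENNReal.ofReal_pos.2 hδ)
  set S : Set α := {x | (n : ℝ) < ‖w x‖}
  have hS : MeasurableSet S := measurableSet_lt measurable_const hw.norm.measurable
  have hlarge : MemLp (S.indicator w) p μ := by
    refine ⟨(hw.indicator hS).aestronglyMeasurable, ?_⟩
    rw [eLpNorm_indicator_eq_eLpNorm_restrict hS, ← eLpNorm_congr_ae hae.restrict,
      ← eLpNorm_indicator_eq_eLpNorm_restrict hS]
    exact (h i S hS hn).trans_lt ENNReal.ofReal_lt_top
  have hsmall : MemLp (Sᶜ.indicator w) p μ := by
    refine .of_bound (hw.indicator hS.compl).aestronglyMeasurable n (.of_forall fun x ↦ ?_)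
    by_cases hx : x ∈ S
    · simp [hx]
    · simpa [hx] using not_lt.1 hx
  simpa only [indicator_self_add_compl] using hlarge.add hsmall

lemma memLp_of_unifIntegrable_of_ae_tendsto [IsFiniteMeasure μ] [NormedAddCommGroup β]
    {u : ℕ → α → β} {v : α → β} (hm : ∀ n, AEStronglyMeasurable (u n) μ)
    (hu : UnifIntegrable u p μ) (hlim : ∀ᵐ x ∂μ, Tendsto (fun n ↦ u n x) atTop (𝓝 (v x))) :
    MemLp v p μ :=
  memLp_of_unifIntegrable (hu.unifIntegrable_of_ae_tendsto atTop hm) (i := ⟨v, id, hlim⟩)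
    (aestronglyMeasurable_of_tendsto_ae atTop hm hlim)

lemma tendsto_integral_of_unifIntegrable [IsFiniteMeasure μ] [NormedAddCommGroup β]
    [NormedSpace ℝ β] {u : ℕ → α → β} {v : α → β} (hi : ∀ n, Integrable (u n) μ)
    (hu : UnifIntegrable u 1 μ) (hlim : ∀ᵐ x ∂μ, Tendsto (fun n ↦ u n x) atTop (𝓝 (v x))) :
    Tendsto (fun n ↦ ∫ x, u n x ∂μ) atTop (𝓝 (∫ x, v x ∂μ)) := by
  have hm (n : ℕ) : AEStronglyMeasurable (u n) μ := (hi n).1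
  have hv := memLp_of_unifIntegrable_of_ae_tendsto hm hu hlim
  exact tendsto_integral_of_L1' v hv.1 (.of_forall hi)
    (tendsto_Lp_finite_of_tendsto_ae le_rfl ENNReal.one_ne_top hm hv hu hlim)

end UniformIntegrability

section VitaliHahnSaks

open scoped symmDiff

lemma symmDiff_limsup_subset {α : Type*} (u : ℕ → Set α) (k : ℕ) :
    u k ∆ limsup u atTop ⊆ ⋃ j, u (k + j) ∆ u (k + (j + 1)) := by
  intro x hx
  by_contra hcon
  simp only [mem_iUnion, not_exists, mem_symmDiff] at hcon
  have hiff (j : ℕ) : x ∈ u (k + j) ↔ x ∈ u k := by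
    induction j with
    | zero => rfl
    | succ j ih => have := hcon j; tauto
  have hlimsup : x ∈ limsup u atTop ↔ x ∈ u k := by
    rw [mem_limsup_iff_frequently_mem, frequently_atTop]
    constructor
    · intro h
      obtain ⟨n, hn, hxn⟩ := h k
      obtain ⟨j, rfl⟩ := Nat.exists_eq_add_of_le hn
      exact (hiff j).1 hxn
    · exact fun h N ↦ ⟨k + N, Nat.le_add_left _ _, (hiff N).2 h⟩
  rw [mem_symmDiff] at hx
  tauto

variable {α E 𝕜 : Type*} [MeasurableSpace α] {μ : Measure α}
  [NormedAddCommGroup E] [NormedSpace ℝ E] [RCLike 𝕜]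

instance completeSpace_measuredSets (μ : Measure α) : CompleteSpace (MeasuredSets μ) := by
  refine EMetric.complete_of_convergent_controlled_sequences (fun n ↦ (2⁻¹ : ℝ≥0∞) ^ n)
    (fun n ↦ ENNReal.pow_pos (by simp) n) fun u hu ↦ ?_
  let S : MeasuredSets μ :=
    ⟨limsup (fun n ↦ (u n : Set α)) atTop, .measurableSet_limsup fun n ↦ (u n).2⟩
  have hdist (k : ℕ) : edist (u k) S ≤ (2⁻¹ : ℝ≥0∞) ^ k * 2 := by
    calc μ ((u k : Set α) ∆ S)
        ≤ μ (⋃ j, (u (k + j) : Set α) ∆ (u (k + (j + 1)) : Set α)) :=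
          measure_mono (symmDiff_limsup_subset (fun n ↦ (u n : Set α)) k)
      _ ≤ ∑' j, μ ((u (k + j) : Set α) ∆ (u (k + (j + 1)) : Set α)) := measure_iUnion_le _
      _ ≤ ∑' j, (2⁻¹ : ℝ≥0∞) ^ (k + j) :=
          ENNReal.tsum_le_tsum fun j ↦ (hu (k + j) (k + j) (k + (j + 1)) le_rfl (by lia)).le
      _ = (2⁻¹ : ℝ≥0∞) ^ k * 2 := by
          simp only [pow_add]
          rw [ENNReal.tsum_mul_left, ENNReal.tsum_geometric, ENNReal.one_sub_inv_two, inv_inv]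
  refine ⟨S, tendsto_iff_edist_tendsto_0.2 ?_⟩
  have hzero : Tendsto (fun k : ℕ ↦ (2⁻¹ : ℝ≥0∞) ^ k * 2) atTop (𝓝 0) := by
    simpa using ENNReal.Tendsto.mul_const (b := 2)
      (ENNReal.tendsto_pow_atTop_nhds_zero_of_lt_one (r := 2⁻¹) (by simp)) (.inr (by simp))
  exact tendsto_of_tendsto_of_tendsto_of_le_of_le tendsto_const_nhds hzero (fun _ ↦ zero_le) hdist

lemma continuous_setIntegral_measuredSets {h : α → E} (hh : Integrable h μ) :
    Continuous fun s : MeasuredSets μ ↦ ∫ x in (s : Set α), h x ∂μ := by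
  rw [EMetric.continuous_iff]
  intro t ε hε
  obtain ⟨δ, hδ, hsmall⟩ := exists_pos_setLIntegral_lt_of_measure_lt hh.2.ne hε.ne'
  refine ⟨δ, hδ, fun s hs ↦ ?_⟩
  have hsm : MeasurableSet (s : Set α) := s.2
  have htm : MeasurableSet (t : Set α) := t.2
  rw [edist_eq_enorm_sub, ← integral_indicator hsm, ← integral_indicator htm,
    ← integral_sub (hh.indicator hsm) (hh.indicator htm)]
  refine (enorm_integral_le_lintegral_enorm _).trans_lt (lt_of_eq_of_lt ?_ (hsmall _ hs))
  rw [← lintegral_indicator (hsm.symmDiff htm)]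
  refine lintegral_congr fun x ↦ ?_
  by_cases hxs : x ∈ (s : Set α) <;> by_cases hxt : x ∈ (t : Set α) <;>
    simp [hxs, hxt, mem_symmDiff]

lemma exists_isOpen_forall_dist_le {X Y : Type*} [TopologicalSpace X] [BaireSpace X] [Nonempty X]
    [PseudoMetricSpace Y] {F : ℕ → X → Y} (hF : ∀ n, Continuous (F n))
    (hc : ∀ x, CauchySeq fun n ↦ F n x) {ε : ℝ} (hε : 0 < ε) :
    ∃ N, ∃ U : Set X, IsOpen U ∧ U.Nonempty ∧ ∀ x ∈ U, ∀ n ≥ N, dist (F n x) (F N x) ≤ ε := by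
  let K (N : ℕ) : Set X := {x | ∀ n ≥ N, dist (F n x) (F N x) ≤ ε}
  have hK (N : ℕ) : IsClosed (K N) := by
    simp only [K, ofPred_forall]
    exact isClosed_biInter fun n _ ↦ isClosed_le ((hF n).dist (hF N)) continuous_const
  have hcover : ⋃ N, K N = univ := by
    refine eq_univ_of_forall fun x ↦ mem_iUnion.2 ?_
    obtain ⟨N, hN⟩ := Metric.cauchySeq_iff'.1 (hc x) ε hε
    exact ⟨N, fun n hn ↦ (hN n hn).le⟩
  obtain ⟨N, hN⟩ := nonempty_interior_of_iUnion_of_closed hK hcover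
  exact ⟨N, interior (K N), isOpen_interior, hN, fun x hx ↦ interior_subset hx⟩

lemma exists_forall_norm_setIntegral_sub_le {h : ℕ → α → E} (hi : ∀ n, Integrable (h n) μ)
    (hc : ∀ A, MeasurableSet A → CauchySeq fun n ↦ ∫ x in A, h n x ∂μ) {ε : ℝ} (hε : 0 < ε) :
    ∃ N, ∃ η : ℝ, 0 < η ∧ ∀ n ≥ N, ∀ B, MeasurableSet B → μ B ≤ ENNReal.ofReal η →
      ‖∫ x in B, (h n x - h N x) ∂μ‖ ≤ ε := by
  have : Nonempty (MeasuredSets μ) := ⟨⟨∅, .empty⟩⟩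
  obtain ⟨N, U, hU, ⟨s, hs⟩, hsmall⟩ := exists_isOpen_forall_dist_le
    (fun n ↦ continuous_setIntegral_measuredSets (hi n)) (fun A : MeasuredSets μ ↦ hc A A.2)
    (half_pos hε)
  obtain ⟨r, hr, hball⟩ := EMetric.mem_nhds_iff.1 (hU.mem_nhds hs)
  obtain ⟨η, -, hηr⟩ := ENNReal.lt_iff_exists_real_btwn.1 hr
  refine ⟨N, η, by simpa using hηr.1, fun n hn B hB hμB ↦ ?_⟩
  have hd : Integrable (fun x ↦ h n x - h N x) μ := (hi n).sub (hi N)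
  have hnear (A : Set α) (hA : MeasurableSet A) (hAs : A ∆ s ⊆ B) :
      ‖∫ x in A, (h n x - h N x) ∂μ‖ ≤ ε / 2 := by
    have hmem : (⟨A, hA⟩ : MeasuredSets μ) ∈ U :=
      hball (((measure_mono hAs).trans hμB).trans_lt hηr.2)
    rw [integral_sub (hi n).integrableOn (hi N).integrableOn, ← dist_eq_norm]
    exact hsmall _ hmem n hn
  have hunion := hnear (s ∪ B) (.union s.2 hB) fun x hx ↦ by
    simp only [mem_symmDiff, mem_union] at hx
    tauto
  have hdiff := hnear (s \ B) (.diff s.2 hB) fun x hx ↦ by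
    simp only [mem_symmDiff, Set.mem_sdiff] at hx
    tauto
  have hsplit := setIntegral_union disjoint_sdiff_left hB hd.integrableOn hd.integrableOn
    (s := (s : Set α) \ B)
  rw [sdiff_union_self] at hsplit
  rw [← sub_eq_iff_eq_add'.2 hsplit]
  exact (norm_sub_le _ _).trans (by linarith)

lemma setIntegral_abs_le_two_mul {u : α → ℝ} (hu : Integrable u μ) {A : Set α}
    (hA : MeasurableSet A) {ε : ℝ} (h : ∀ B ⊆ A, MeasurableSet B → |∫ x in B, u x ∂μ| ≤ ε) :
    ∫ x in A, |u x| ∂μ ≤ 2 * ε := by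
  obtain ⟨w, hw, hae⟩ := hu.1
  have hpos : MeasurableSet {x | 0 ≤ w x} := measurableSet_le measurable_const hw.measurable
  have hneg : MeasurableSet {x | w x ≤ 0} := measurableSet_le hw.measurable measurable_const
  have hwB (B : Set α) (hBA : B ⊆ A) (hB : MeasurableSet B) : |∫ x in B, w x ∂μ| ≤ ε := by
    rw [← integral_congr_ae (ae_restrict_of_ae hae)]
    exact h B hBA hB
  have habs : ∫ x in A, |u x| ∂μ = ∫ x in A, ‖w x‖ ∂μ :=
    integral_congr_ae (ae_restrict_of_ae (hae.mono fun x hx ↦ by simp [hx]))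
  rw [habs, integral_norm_eq_pos_sub_neg (hu.congr hae).restrict, Measure.restrict_restrict hpos,
    Measure.restrict_restrict hneg]
  have hle := (abs_le.1 (hwB _ inter_subset_right (hpos.inter hA))).2
  have hge := (abs_le.1 (hwB _ inter_subset_right (hneg.inter hA))).1
  linarith

lemma norm_le_abs_re_add_abs_im (z : 𝕜) : ‖z‖ ≤ |RCLike.re z| + |RCLike.im z| := by
  refine le_of_sq_le_sq ?_ (by positivity)
  rw [RCLike.norm_sq_eq_def]
  nlinarith [sq_abs (RCLike.re z), sq_abs (RCLike.im z),
    mul_nonneg (abs_nonneg (RCLike.re z)) (abs_nonneg (RCLike.im z))]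

lemma setLIntegral_enorm_le_four_mul {u : α → 𝕜} (hu : Integrable u μ) {A : Set α}
    (hA : MeasurableSet A) {ε : ℝ} (h : ∀ B ⊆ A, MeasurableSet B → ‖∫ x in B, u x ∂μ‖ ≤ ε) :
    ∫⁻ x in A, ‖u x‖ₑ ∂μ ≤ ENNReal.ofReal (4 * ε) := by
  have hre := setIntegral_abs_le_two_mul hu.re hA fun B hBA hB ↦ by
    rw [integral_re hu.restrict]
    exact (RCLike.abs_re_le_norm _).trans (h B hBA hB)
  have him := setIntegral_abs_le_two_mul hu.im hA fun B hBA hB ↦ by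
    rw [integral_im hu.restrict]
    exact (RCLike.abs_im_le_norm _).trans (h B hBA hB)
  rw [← ofReal_integral_norm_eq_lintegral_enorm hu.restrict]
  refine ENNReal.ofReal_le_ofReal ?_
  calc ∫ x in A, ‖u x‖ ∂μ
      ≤ ∫ x in A, (|RCLike.re (u x)| + |RCLike.im (u x)|) ∂μ :=
        integral_mono hu.norm.restrict (hu.re.abs.restrict.add hu.im.abs.restrict)
          fun x ↦ norm_le_abs_re_add_abs_im _
    _ = ∫ x in A, |RCLike.re (u x)| ∂μ + ∫ x in A, |RCLike.im (u x)| ∂μ :=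
        integral_add hu.re.abs.restrict hu.im.abs.restrict
    _ ≤ 4 * ε := by linarith

theorem unifIntegrable_of_cauchySeq_setIntegral {h : ℕ → α → 𝕜} (hi : ∀ n, Integrable (h n) μ)
    (hc : ∀ A, MeasurableSet A → CauchySeq fun n ↦ ∫ x in A, h n x ∂μ) :
    UnifIntegrable h 1 μ := by
  refine unifIntegrable_one_iff.2 fun ε hε ↦ ?_
  obtain ⟨N, η, hη, hdiff⟩ := exists_forall_norm_setIntegral_sub_le hi hc (ε := ε / 8)
    (by positivity)
  obtain ⟨δ, hδ, hhead⟩ := unifIntegrable_one_iff.1 (unifIntegrable_finite le_rfl ENNReal.one_ne_top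
    fun k : Iic N ↦ memLp_one_iff_integrable.2 (hi k)) (ε / 2) (half_pos hε)
  refine ⟨min η δ, lt_min hη hδ, fun n A hA hμA ↦ ?_⟩
  have hμη := hμA.trans (ENNReal.ofReal_le_ofReal (min_le_left _ _))
  have hμδ := hμA.trans (ENNReal.ofReal_le_ofReal (min_le_right _ _))
  rcases le_total n N with hn | hn
  · exact (hhead ⟨n, hn⟩ A hA hμδ).trans (ENNReal.ofReal_le_ofReal (by linarith))
  calc ∫⁻ x in A, ‖h n x‖ₑ ∂μ
      ≤ ∫⁻ x in A, (‖h n x - h N x‖ₑ + ‖h N x‖ₑ) ∂μ := lintegral_mono fun x ↦ by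
        simpa using enorm_add_le (h n x - h N x) (h N x)
    _ = ∫⁻ x in A, ‖h n x - h N x‖ₑ ∂μ + ∫⁻ x in A, ‖h N x‖ₑ ∂μ :=
        lintegral_add_right' _ (hi N).1.restrict.enorm
    _ ≤ ENNReal.ofReal (4 * (ε / 8)) + ENNReal.ofReal (ε / 2) := by
        gcongr
        · exact setLIntegral_enorm_le_four_mul ((hi n).sub (hi N)) hA fun B hBA hB ↦
            hdiff n hn B hB ((measure_mono hBA).trans hμη)
        · exact hhead ⟨N, self_mem_Iic⟩ A hA hμδ
    _ = ENNReal.ofReal ε := by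
        rw [← ENNReal.ofReal_add (by positivity) (by positivity)]
        ring_nf

end VitaliHahnSaks

/-! ### Cauchy transforms of `L log L` functions -/

section LlogL

open Real (posLog)

variable {g h : ℝ → ℂ}

lemma memLlogL_iff : MemLlogL g ↔
    AEStronglyMeasurable g μI ∧ Integrable (fun x ↦ ‖g x‖ * posLog ‖g x‖) μI := by
  simp only [MemLlogL, posLog, max_comm (0 : ℝ)]
  rfl

lemma integrable_of_memLlogL (hg : MemLlogL g) : Integrable g μI := by
  obtain ⟨hgm, hlog⟩ := memLlogL_iff.1 hg
  refine ((integrable_const (Real.exp 1)).add hlog).mono' hgm (.of_forall fun x ↦ ?_)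
  have hnorm := norm_nonneg (g x)
  rcases le_total ‖g x‖ (Real.exp 1) with hle | hge
  · exact hle.trans (le_add_of_nonneg_right (mul_nonneg hnorm Real.posLog_nonneg))
  · have hone : 1 ≤ posLog ‖g x‖ := by
      calc 1 = posLog (Real.exp 1) := by simp [posLog]
        _ ≤ posLog ‖g x‖ := Real.posLog_le_posLog (Real.exp_pos 1).le hge
    exact (le_mul_of_one_le_right hnorm hone).trans (le_add_of_nonneg_left (Real.exp_pos 1).le)

lemma memLlogL_of_norm_le (hg : MemLlogL g) (hh : AEStronglyMeasurable h μI) {c : ℝ}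
    (hc : ∀ x, ‖h x‖ ≤ c * ‖g x‖) : MemLlogL h := by
  obtain ⟨-, hlog⟩ := memLlogL_iff.1 hg
  have hdom : Integrable
      (fun x ↦ |c| * (posLog c * ‖g x‖ + ‖g x‖ * posLog ‖g x‖)) μI :=
    (((integrable_of_memLlogL hg).norm.const_mul _).add hlog).const_mul _
  refine memLlogL_iff.2 ⟨hh, hdom.mono' (hh.norm.mul
    (Real.continuous_posLog.comp_aestronglyMeasurable hh.norm)) (.of_forall fun x ↦ ?_)⟩
  rw [Real.norm_of_nonneg (mul_nonneg (norm_nonneg _) Real.posLog_nonneg)]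
  calc ‖h x‖ * posLog ‖h x‖
      ≤ (|c| * ‖g x‖) * (posLog c + posLog ‖g x‖) := by
        have hle := Real.posLog_le_posLog (norm_nonneg _) (hc x)
        have hnonneg := Real.posLog_nonneg (x := ‖h x‖)
        gcongr
        · exact (hc x).trans (by gcongr; exact le_abs_self c)
        · exact hle.trans Real.posLog_mul
    _ = |c| * (posLog c * ‖g x‖ + ‖g x‖ * posLog ‖g x‖) := by ring

lemma memLlogL_one : MemLlogL fun _ ↦ 1 :=
  memLlogL_iff.2 ⟨aestronglyMeasurable_const, by simp⟩

lemma mul_le_mul_posLog_add_exp {a ε : ℝ} (ha : 0 ≤ a) (b : ℝ) (hε : 0 < ε) :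
    a * b ≤ 4 * (a * posLog a) + ε * Real.exp (b / 2) + 8 * (8 / ε) ^ 3 := by
  rcases le_total b (4 * posLog a) with hb | hb
  · have hab : a * b ≤ a * (4 * posLog a) := by gcongr
    have hrest : 0 ≤ ε * Real.exp (b / 2) + 8 * (8 / ε) ^ 3 := by positivity
    linarith
  set Y := Real.exp (b / 8)
  have hY : 0 < Y := Real.exp_pos _
  have hbY : b ≤ 8 * Y := by linarith [Real.add_one_le_exp (b / 8)]
  have haY : a ≤ Y ^ 2 := by
    rw [← Real.exp_nat_mul, Nat.cast_ofNat]
    rcases ha.eq_or_lt with rfl | ha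
    · positivity
    · rw [← Real.log_le_iff_le_exp ha]
      linarith [le_max_right 0 (Real.log a), show posLog a = max 0 (Real.log a) from rfl]
  have hexp : Real.exp (b / 2) = Y ^ 4 := by
    rw [← Real.exp_nat_mul]
    ring_nf
  have hcube : 8 * Y ^ 3 ≤ ε * Y ^ 4 + 8 * (8 / ε) ^ 3 := by
    rcases le_total Y (8 / ε) with hle | hge
    · have : Y ^ 3 ≤ (8 / ε) ^ 3 := by gcongr
      nlinarith [pow_pos hY 4]
    · have : 8 * Y ^ 3 ≤ ε * Y * Y ^ 3 := by
        gcongr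
        rwa [← div_le_iff₀' hε]
      nlinarith [pow_pos (div_pos (by norm_num : (0 : ℝ) < 8) hε) 3]
  have hab : a * b ≤ 8 * Y ^ 3 := by
    calc a * b ≤ a * (8 * Y) := by gcongr
      _ ≤ Y ^ 2 * (8 * Y) := by gcongr
      _ = 8 * Y ^ 3 := by ring
  have hlog : 0 ≤ a * posLog a := mul_nonneg ha Real.posLog_nonneg
  rw [hexp]
  linarith

lemma setLIntegral_enorm_mul_le {α : Type*} [MeasurableSpace α] {μ : Measure α} {u v : α → ℂ}
    {C ε : ℝ} (hv : AEMeasurable v μ) (hε : 0 < ε)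
    (hexp : ∫⁻ x, ENNReal.ofReal (Real.exp (‖v x‖ / 2)) ∂μ ≤ ENNReal.ofReal C) (E : Set α) :
    ∫⁻ x in E, ‖u x * v x‖ₑ ∂μ ≤ 4 * ∫⁻ x in E, ‖‖u x‖ * posLog ‖u x‖‖ₑ ∂μ +
      ENNReal.ofReal (ε * C) + ENNReal.ofReal (8 * (8 / ε) ^ 3) * μ E := by
  have hpoint (x : α) : ‖u x * v x‖ₑ ≤ 4 * ‖‖u x‖ * posLog ‖u x‖‖ₑ +
      ENNReal.ofReal ε * ENNReal.ofReal (Real.exp (‖v x‖ / 2)) +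
        ENNReal.ofReal (8 * (8 / ε) ^ 3) := by
    have hlog : 0 ≤ ‖u x‖ * posLog ‖u x‖ := mul_nonneg (norm_nonneg _) Real.posLog_nonneg
    rw [Real.enorm_of_nonneg hlog, ← ENNReal.ofReal_ofNat, ← ENNReal.ofReal_mul (by norm_num),
      ← ENNReal.ofReal_mul hε.le, ← ENNReal.ofReal_add (by positivity) (by positivity),
      ← ENNReal.ofReal_add (by positivity) (by positivity), ← ofReal_norm, norm_mul]
    exact ENNReal.ofReal_le_ofReal (mul_le_mul_posLog_add_exp (norm_nonneg _) _ hε)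
  have hm : AEMeasurable (fun x ↦ ENNReal.ofReal (Real.exp (‖v x‖ / 2))) μ := by fun_prop
  refine (lintegral_mono hpoint).trans ?_
  rw [lintegral_add_right _ measurable_const, lintegral_add_right' _ (hm.restrict.const_mul _),
    lintegral_const_mul' _ _ ENNReal.ofNat_ne_top,
    lintegral_const_mul' _ _ ENNReal.ofReal_ne_top, setLIntegral_const, ENNReal.ofReal_mul hε.le]
  gcongr
  exact (setLIntegral_le_lintegral _ _).trans hexp

variable {ι : Type*} {θ : ι → ℝ → ℂ} {δ : ι → ℝ}

lemma unifIntegrable_mul_cauchyTransform_of_norm_le_one (hg : MemLlogL g)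
    (hθ : ∀ i, AEStronglyMeasurable (θ i) μI) (hθ₁ : ∀ i s, ‖θ i s‖ ≤ 1) (hδ : ∀ i, δ i ≠ 0) :
    UnifIntegrable (fun i (x : ℝ) ↦ g x * cauchyTransform μI (θ i) (x + δ i * Complex.I)) 1 μI := by
  refine unifIntegrable_one_iff.2 fun ε hε ↦ ?_
  obtain ⟨C, hC⟩ := exists_lintegral_exp_norm_cauchyTransform_le
  obtain ⟨η, hη, hlog⟩ := unifIntegrable_one_iff.1 (unifIntegrable_const (ι := Unit) le_rfl
    ENNReal.one_ne_top (memLp_one_iff_integrable.2 (memLlogL_iff.1 hg).2)) (ε / 16) (by positivity)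
  set ε' := ε / (4 * (C + 1))
  have hε' : 0 < ε' := by positivity
  set M := 8 * (8 / ε') ^ 3
  have hM : 0 < M := by positivity
  refine ⟨min η (ε / 4 / M), by positivity, fun i E hE hμE ↦ ?_⟩
  have hμη := hμE.trans (ENNReal.ofReal_le_ofReal (min_le_left _ _))
  have hμM := hμE.trans (ENNReal.ofReal_le_ofReal (min_le_right _ _))
  have hi : Integrable (θ i) μI := .of_bound (hθ i) 1 (.of_forall (hθ₁ i))
  have hslice := (continuous_cauchyTransform_slice hi (hδ i)).measurable.aemeasurable (μ := μI)
  have hexp := hC (θ i) (hθ i) (hθ₁ i) (δ i) (hδ i)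
  rw [← ENNReal.ofReal_coe_nnreal] at hexp
  calc ∫⁻ x in E, ‖g x * cauchyTransform μI (θ i) (x + δ i * Complex.I)‖ₑ ∂μI
      ≤ 4 * ∫⁻ x in E, ‖‖g x‖ * posLog ‖g x‖‖ₑ ∂μI + ENNReal.ofReal (ε' * C) +
          ENNReal.ofReal M * μI E := setLIntegral_enorm_mul_le hslice hε' hexp E
    _ ≤ ENNReal.ofReal 4 * ENNReal.ofReal (ε / 16) + ENNReal.ofReal (ε' * C) +
          ENNReal.ofReal M * ENNReal.ofReal (ε / 4 / M) := by
        rw [ENNReal.ofReal_ofNat]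
        gcongr
        exact hlog () E hE hμη
    _ = ENNReal.ofReal (4 * (ε / 16) + ε' * C + M * (ε / 4 / M)) := by
        rw [← ENNReal.ofReal_mul (by norm_num), ← ENNReal.ofReal_mul hM.le,
          ← ENNReal.ofReal_add (by positivity) (by positivity),
          ← ENNReal.ofReal_add (by positivity) (by positivity)]
    _ ≤ ENNReal.ofReal ε := by
        have hε'C : ε' * C ≤ ε / 4 := by
          calc ε' * C ≤ ε' * (C + 1) := by gcongr; simp
            _ = ε / 4 := by simp only [ε']; field_simp
        rw [mul_div_cancel₀ _ hM.ne']
        exact ENNReal.ofReal_le_ofReal (by linarith)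

theorem unifIntegrable_mul_cauchyTransform (hg : MemLlogL g)
    (hθ : ∀ i, AEStronglyMeasurable (θ i) μI) {C : ℝ} (hC : ∀ i s, ‖θ i s‖ ≤ C)
    (hδ : ∀ i, δ i ≠ 0) :
    UnifIntegrable (fun i (x : ℝ) ↦ g x * cauchyTransform μI (θ i) (x + δ i * Complex.I)) 1 μI := by
  set M := max C 1
  have hM : 0 < M := by positivity
  have hMg : MemLlogL fun x ↦ (M : ℂ) * g x :=
    memLlogL_of_norm_le (c := M) hg ((memLlogL_iff.1 hg).1.const_mul _) fun x ↦ by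
      simp [abs_of_pos hM]
  have hscaled := unifIntegrable_mul_cauchyTransform_of_norm_le_one
    (θ := fun i s ↦ (M : ℂ)⁻¹ * θ i s) hMg (fun i ↦ (hθ i).const_mul _) (fun i s ↦ by
      rw [norm_mul, norm_inv, Complex.norm_real, Real.norm_of_nonneg hM.le, inv_mul_le_one₀ hM]
      exact (hC i s).trans (le_max_left _ _)) hδ
  refine hscaled.ae_eq fun i ↦ .of_forall fun x ↦ ?_
  have hM' : (M : ℂ) ≠ 0 := Complex.ofReal_ne_zero.2 hM.ne'
  simp only [cauchyTransform_const_mul]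
  field_simp

end LlogL

section Duality

lemma integrable_mul_cauchyTransform_slice {μ ν : Measure ℝ} {f g : ℝ → ℂ} (hf : Integrable f μ)
    (hg : Integrable g ν) {δ : ℝ} (hδ : δ ≠ 0) :
    Integrable (fun x : ℝ ↦ f x * cauchyTransform ν g (x + δ * Complex.I)) μ :=
  hf.mul_bdd (c := Real.pi⁻¹ * (|δ|⁻¹ * ∫ s, ‖g s‖ ∂ν))
    (continuous_cauchyTransform_slice hg hδ).aestronglyMeasurable <| .of_forall fun x ↦ by
      simpa using norm_cauchyTransform_le hg (z := x + δ * Complex.I) (by simpa using hδ)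

lemma integral_mul_cauchyTransform {μ ν : Measure ℝ} [SFinite μ] [SFinite ν] {f g : ℝ → ℂ}
    (hf : Integrable f μ) (hg : Integrable g ν) {δ : ℝ} (hδ : δ ≠ 0) :
    ∫ x : ℝ, f x * cauchyTransform ν g (x + δ * Complex.I) ∂μ =
      -∫ s : ℝ, g s * cauchyTransform μ f (s + (-δ : ℝ) * Complex.I) ∂ν := by
  have him (x : ℝ) : ((x : ℂ) + δ * Complex.I).im ≠ 0 := by simpa using hδ
  let K (x s : ℝ) : ℂ := f x * g s * ((s : ℂ) - (x + δ * Complex.I))⁻¹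
  have hK : Integrable (Function.uncurry K) (μ.prod ν) := by
    have hcont : Continuous fun p : ℝ × ℝ ↦ ((p.2 : ℂ) - (p.1 + δ * Complex.I))⁻¹ :=
      Continuous.inv₀ (by fun_prop) fun p ↦ ofReal_sub_ne_zero (him p.1) p.2
    refine (hf.mul_prod hg).mul_bdd (c := |δ|⁻¹) hcont.aestronglyMeasurable
      (.of_forall fun p ↦ ?_)
    simpa using norm_inv_ofReal_sub_le (him p.1) p.2
  have hleft (x : ℝ) : f x * cauchyTransform ν g (x + δ * Complex.I) =
      (Real.pi : ℂ)⁻¹ * ∫ s, K x s ∂ν := by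
    simp only [K, cauchyTransform, mul_assoc, integral_const_mul, div_eq_mul_inv]
    ring
  have hright (s : ℝ) : g s * cauchyTransform μ f (s + (-δ : ℝ) * Complex.I) =
      -((Real.pi : ℂ)⁻¹ * ∫ x, K x s ∂μ) := by
    have hsym (x : ℝ) : f x / ((x : ℂ) - (s + (-δ : ℝ) * Complex.I)) =
        -(f x * ((s : ℂ) - (x + δ * Complex.I))⁻¹) := by
      rw [← mul_neg, ← inv_neg, div_eq_mul_inv]
      push_cast
      ring_nf
    simp only [K, cauchyTransform, hsym, integral_neg, mul_right_comm _ (g s),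
      integral_mul_const]
    ring
  simp only [hleft, hright, integral_neg, neg_neg, integral_const_mul]
  rw [integral_integral_swap hK]

lemma exists_norm_le_one_lintegral_enorm_eq {α 𝕜 : Type*} [MeasurableSpace α] {μ : Measure α}
    [RCLike 𝕜] {h : α → 𝕜} (hh : Integrable h μ) :
    ∃ ψ : α → 𝕜, AEStronglyMeasurable ψ μ ∧ (∀ x, ‖ψ x‖ ≤ 1) ∧
      ∫⁻ x, ‖h x‖ₑ ∂μ = ‖∫ x, ψ x * h x ∂μ‖ₑ := by
  have hconj : AEMeasurable (fun x ↦ (starRingEnd 𝕜) (h x)) μ :=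
    RCLike.continuous_conj.measurable.comp_aemeasurable hh.1.aemeasurable
  have hnorm : AEMeasurable (fun x ↦ (‖h x‖ : 𝕜)) μ :=
    RCLike.continuous_ofReal.measurable.comp_aemeasurable hh.1.norm.aemeasurable
  refine ⟨fun x ↦ (starRingEnd 𝕜) (h x) / (‖h x‖ : 𝕜), (hconj.div hnorm).aestronglyMeasurable,
    fun x ↦ by simpa using div_self_le_one ‖h x‖, ?_⟩
  have hmul (x : α) : (starRingEnd 𝕜) (h x) / (‖h x‖ : 𝕜) * h x = (‖h x‖ : 𝕜) := by
    rw [div_mul_eq_mul_div, RCLike.conj_mul, sq, mul_self_div_self]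
  simp_rw [hmul]
  rw [integral_ofReal, ← ofReal_norm, RCLike.norm_ofReal,
    abs_of_nonneg (integral_nonneg fun x ↦ norm_nonneg _),
    ofReal_integral_norm_eq_lintegral_enorm hh]

variable {g : ℝ → ℂ}

lemma lintegral_enorm_cauchyTransform_le {ε : ℝ≥0∞} (hg : Integrable g μI) {δ : ℝ} (hδ : δ ≠ 0)
    (h : ∀ ψ : ℝ → ℂ, AEStronglyMeasurable ψ μI → (∀ s, ‖ψ s‖ ≤ 1) →
      ∫⁻ x, ‖g x * cauchyTransform μI ψ (x + (-δ : ℝ) * Complex.I)‖ₑ ∂μI ≤ ε) :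
    ∫⁻ x : ℝ, ‖cauchyTransform μI g (x + δ * Complex.I)‖ₑ ∂μI ≤ ε := by
  obtain ⟨ψ, hψ, hψ₁, heq⟩ := exists_norm_le_one_lintegral_enorm_eq <| by
    simpa using integrable_mul_cauchyTransform_slice (integrable_const (1 : ℂ) (μ := μI)) hg hδ
  have hψi : Integrable ψ μI := .of_bound hψ 1 (.of_forall hψ₁)
  rw [heq, integral_mul_cauchyTransform hψi hg hδ, enorm_neg]
  exact (enorm_integral_le_lintegral_enorm _).trans (h ψ hψ hψ₁)

lemma exists_lintegral_enorm_cauchyTransform_sub_boundedTruncation_le (hg : MemLlogL g) {ε : ℝ}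
    (hε : 0 < ε) : ∃ n, ∀ δ : ℝ, δ ≠ 0 → ∫⁻ x : ℝ, ‖cauchyTransform μI
      (g - boundedTruncation g n) (x + δ * Complex.I)‖ₑ ∂μI ≤ ENNReal.ofReal ε := by
  have hgi := integrable_of_memLlogL hg
  let ι := {p : (ℝ → ℂ) × ℝ // AEStronglyMeasurable p.1 μI ∧ (∀ s, ‖p.1 s‖ ≤ 1) ∧ p.2 ≠ 0}
  obtain ⟨η, hη, hui⟩ := unifIntegrable_one_iff.1 (unifIntegrable_mul_cauchyTransform hg
    (fun p : ι ↦ p.2.1) (fun p ↦ p.2.2.1) fun p ↦ p.2.2.2) ε hε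
  obtain ⟨n, hn⟩ := exists_measure_lt_norm_le hgi.1 (ENNReal.ofReal_pos.2 hη)
  refine ⟨n, fun δ hδ ↦ lintegral_enorm_cauchyTransform_le
    (hgi.sub (integrable_boundedTruncation hgi n)) hδ fun ψ hψ hψ₁ ↦ ?_⟩
  set S := toMeasurable μI {x | (n : ℝ) < ‖g x‖}
  have hS : MeasurableSet S := measurableSet_toMeasurable _ _
  refine le_trans ?_ (hui ⟨(ψ, -δ), hψ, hψ₁, neg_ne_zero.2 hδ⟩ S hS
    ((measure_toMeasurable _).trans_le hn))
  rw [← lintegral_indicator hS]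
  refine lintegral_mono fun x ↦ ?_
  by_cases hx : (n : ℝ) < ‖g x‖
  · have hxS : x ∈ S := subset_toMeasurable _ _ hx
    rw [indicator_of_mem hxS]
    simp [boundedTruncation, hx.not_ge]
  · simp [boundedTruncation, not_lt.1 hx]

theorem unifIntegrable_cauchyTransform (hg : MemLlogL g) {ι : Type*} {δ : ι → ℝ}
    (hδ : ∀ i, δ i ≠ 0) :
    UnifIntegrable (fun i (x : ℝ) ↦ cauchyTransform μI g (x + δ i * Complex.I)) 1 μI := by
  have hgi := integrable_of_memLlogL hg
  refine unifIntegrable_one_iff.2 fun ε hε ↦ ?_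
  obtain ⟨n, hn⟩ := exists_lintegral_enorm_cauchyTransform_sub_boundedTruncation_le hg (half_pos hε)
  have hbi := integrable_boundedTruncation hgi n
  obtain ⟨η, hη, hbdd⟩ := unifIntegrable_one_iff.1 (unifIntegrable_mul_cauchyTransform
    (θ := fun _ ↦ boundedTruncation g n) memLlogL_one (fun _ ↦ hbi.1)
    (fun _ ↦ norm_boundedTruncation_le_natCast g n) hδ) (ε / 2) (half_pos hε)
  refine ⟨η, hη, fun i E hE hμE ↦ ?_⟩
  have hsplit (x : ℝ) : cauchyTransform μI g (x + δ i * Complex.I) =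
      1 * cauchyTransform μI (boundedTruncation g n) (x + δ i * Complex.I) +
        cauchyTransform μI (g - boundedTruncation g n) (x + δ i * Complex.I) := by
    rw [cauchyTransform_sub hgi hbi (by simpa using hδ i)]
    ring
  have hslice := (continuous_cauchyTransform_slice (hgi.sub hbi) (hδ i)).measurable
  calc ∫⁻ x in E, ‖cauchyTransform μI g (x + δ i * Complex.I)‖ₑ ∂μI
      ≤ ∫⁻ x in E, ‖1 * cauchyTransform μI (boundedTruncation g n) (x + δ i * Complex.I)‖ₑ ∂μI +
          ∫⁻ x in E, ‖cauchyTransform μI (g - boundedTruncation g n) (x + δ i * Complex.I)‖ₑ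
            ∂μI := by
        rw [← lintegral_add_right _ hslice.enorm]
        exact lintegral_mono fun x ↦ (congrArg _ (hsplit x)).trans_le (enorm_add_le _ _)
    _ ≤ ENNReal.ofReal (ε / 2) + ENNReal.ofReal (ε / 2) := by
        gcongr
        · exact hbdd i E hE hμE
        · exact (setLIntegral_le_lintegral _ _).trans (hn _ (hδ i))
    _ = ENNReal.ofReal ε := by
        rw [← ENNReal.ofReal_add (by positivity) (by positivity), add_halves]

end Duality

/-! ### The Parseval formula -/

section Parseval

variable {f g : ℝ → ℂ} {d : ℕ → ℝ}

lemma ae_tendsto_mul_cauchyTransform_neg (hf : Integrable f μI) (hd : Tendsto d atTop (𝓝[>] 0)) :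
    ∀ᵐ x : ℝ ∂μI, Tendsto (fun n ↦ g x * cauchyTransform μI f (x + (-d n : ℝ) * Complex.I)) atTop
      (𝓝 (g x * (FHT f x - Complex.I * f x))) := by
  have hneg : Tendsto (fun δ : ℝ ↦ -δ) (𝓝[>] 0) (𝓝[<] 0) := by
    simpa using tendsto_neg_nhdsGT (a := (0 : ℝ))
  filter_upwards [ae_tendsto_cauchyTransform_nhdsLT hf] with x hx
  exact (hx.comp (hneg.comp hd)).const_mul (g x)

theorem integrable_FHT_of_memLlogL (hg : MemLlogL g) : Integrable (FHT g) μI := by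
  have hgi := integrable_of_memLlogL hg
  obtain ⟨d, -, hd₀, hd⟩ := exists_seq_strictAnti_tendsto_nhdsWithin (0 : ℝ)
  have hboundary : Integrable (fun x ↦ FHT g x + Complex.I * g x) μI := by
    refine memLp_one_iff_integrable.1 <| memLp_of_unifIntegrable_of_ae_tendsto
      (fun n ↦ (continuous_cauchyTransform_slice hgi (hd₀ n).ne').aestronglyMeasurable)
      (unifIntegrable_cauchyTransform hg fun n ↦ (hd₀ n).ne') ?_
    filter_upwards [ae_tendsto_cauchyTransform_nhdsGT hgi] with x hx using hx.comp hd
  refine (hboundary.sub (hgi.const_mul Complex.I)).congr (.of_forall fun x ↦ ?_)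
  simp

theorem integrable_mul_FHT_of_norm_le (hg : MemLlogL g) (hf : AEStronglyMeasurable f μI) {C : ℝ}
    (hC : ∀ s, ‖f s‖ ≤ C) : Integrable (fun x ↦ g x * FHT f x) μI := by
  have hgi := integrable_of_memLlogL hg
  have hfi : Integrable f μI := .of_bound hf C (.of_forall hC)
  obtain ⟨d, -, hd₀, hd⟩ := exists_seq_strictAnti_tendsto_nhdsWithin (0 : ℝ)
  have hd₀' (n : ℕ) : -d n ≠ 0 := neg_ne_zero.2 (hd₀ n).ne'
  have hboundary := memLp_one_iff_integrable.1 <| memLp_of_unifIntegrable_of_ae_tendsto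
    (fun n ↦ (integrable_mul_cauchyTransform_slice hgi hfi (hd₀' n)).1)
    (unifIntegrable_mul_cauchyTransform hg (fun _ ↦ hf) (fun _ ↦ hC) hd₀')
    (ae_tendsto_mul_cauchyTransform_neg hfi hd)
  refine (hboundary.add ((hgi.mul_bdd hf (.of_forall hC)).const_mul Complex.I)).congr
    (.of_forall fun x ↦ ?_)
  simp only [Pi.add_apply]
  ring

theorem integral_mul_FHT_of_norm_le (hg : MemLlogL g) (hf : AEStronglyMeasurable f μI) {C : ℝ}
    (hC : ∀ s, ‖f s‖ ≤ C) : ∫ x, f x * FHT g x ∂μI = -∫ x, g x * FHT f x ∂μI := by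
  have hgi := integrable_of_memLlogL hg
  have hfi : Integrable f μI := .of_bound hf C (.of_forall hC)
  obtain ⟨d, -, hd₀, hd⟩ := exists_seq_strictAnti_tendsto_nhdsWithin (0 : ℝ)
  have hdne (n : ℕ) : d n ≠ 0 := (hd₀ n).ne'
  have hdne' (n : ℕ) : -d n ≠ 0 := neg_ne_zero.2 (hdne n)
  have hupper : Tendsto (fun n ↦ ∫ x : ℝ, f x * cauchyTransform μI g (x + d n * Complex.I) ∂μI)
      atTop (𝓝 (∫ x, f x * (FHT g x + Complex.I * g x) ∂μI)) := by
    refine tendsto_integral_of_unifIntegrable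
      (fun n ↦ integrable_mul_cauchyTransform_slice hfi hgi (hdne n))
      (unifIntegrable_bdd_mul (fun _ ↦ hC) (unifIntegrable_cauchyTransform hg hdne)) ?_
    filter_upwards [ae_tendsto_cauchyTransform_nhdsGT hgi] with x hx
    exact (hx.comp hd).const_mul (f x)
  have hlower : Tendsto
      (fun n ↦ ∫ x : ℝ, g x * cauchyTransform μI f (x + (-d n : ℝ) * Complex.I) ∂μI)
      atTop (𝓝 (∫ x, g x * (FHT f x - Complex.I * f x) ∂μI)) :=
    tendsto_integral_of_unifIntegrable
      (fun n ↦ integrable_mul_cauchyTransform_slice hgi hfi (hdne' n))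
      (unifIntegrable_mul_cauchyTransform hg (fun _ ↦ hf) (fun _ ↦ hC) hdne')
      (ae_tendsto_mul_cauchyTransform_neg hfi hd)
  have hboundary := tendsto_nhds_unique hupper
    (hlower.neg.congr fun n ↦ (integral_mul_cauchyTransform hfi hgi (hdne n)).symm)
  have hfgi : Integrable (fun x ↦ Complex.I * (f x * g x)) μI :=
    (hgi.bdd_mul hf (.of_forall hC)).const_mul Complex.I
  have hleft := integral_add ((integrable_FHT_of_memLlogL hg).bdd_mul hf (.of_forall hC)) hfgi
  have hright := integral_sub (integrable_mul_FHT_of_norm_le hg hf hC) hfgi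
  simp only [mul_add, mul_sub, mul_left_comm _ Complex.I, mul_comm (g _) (f _)] at hboundary
  linear_combination hboundary - hleft - hright

end Parseval

/-! ### The product formula for Cauchy transforms -/

section PartialFractions

variable {μ : Measure ℝ} {g : ℝ → ℂ} {z w : ℂ}

lemma cauchyTransform_mul_inv_sub (hg : Integrable g μ) (hz : z.im ≠ 0) (hw : w.im ≠ 0)
    (hwz : w ≠ z) : cauchyTransform μ (fun s ↦ g s * ((s : ℂ) - z)⁻¹) w =
      (cauchyTransform μ g w - cauchyTransform μ g z) * (w - z)⁻¹ := by
  have hne : w - z ≠ 0 := sub_ne_zero.2 hwz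
  simp only [cauchyTransform]
  rw [← mul_sub, ← integral_sub (integrable_div_ofReal_sub hg hw) (integrable_div_ofReal_sub hg hz),
    mul_assoc, ← integral_mul_const]
  congr 2 with s
  have hsz := ofReal_sub_ne_zero hz s
  have hsw := ofReal_sub_ne_zero hw s
  field_simp
  ring

lemma FHT_mul_inv_sub (hg : Integrable g μI) (hz : 0 < z.im) :
    ∀ᵐ x ∂μI, FHT (fun s ↦ g s * ((s : ℂ) - z)⁻¹) x =
      (FHT g x - cauchyTransform μI g z) * ((x : ℂ) - z)⁻¹ := by
  have hgz : Integrable (fun s : ℝ ↦ g s * ((s : ℂ) - z)⁻¹) μI := by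
    simpa only [div_eq_mul_inv] using integrable_div_ofReal_sub hg hz.ne'
  filter_upwards [ae_tendsto_cauchyTransform_nhdsGT hg, ae_tendsto_cauchyTransform_nhdsGT hgz]
    with x hlim hlimz
  have hline : Tendsto (fun ε : ℝ ↦ (x : ℂ) + ε * Complex.I - z) (𝓝[>] 0) (𝓝 ((x : ℂ) - z)) := by
    have hcont : Continuous fun ε : ℝ ↦ (x : ℂ) + ε * Complex.I - z := by fun_prop
    simpa using (hcont.tendsto 0).mono_left nhdsWithin_le_nhds
  have hdiff := (hlim.sub_const (cauchyTransform μI g z)).mul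
    (hline.inv₀ (ofReal_sub_ne_zero hz.ne' x))
  have heq := tendsto_nhds_unique_of_eventuallyEq hlimz hdiff <| by
    filter_upwards [Ioo_mem_nhdsGT hz] with ε hε
    refine cauchyTransform_mul_inv_sub hg hz.ne' (by simpa using hε.1.ne') fun h ↦ hε.2.ne ?_
    simpa using congrArg Complex.im h
  linear_combination heq

end PartialFractions

section ProductFormula

variable {f g b : ℝ → ℂ}

lemma tendsto_integral_boundedTruncation_mul {μ : Measure ℝ} {q : ℝ → ℂ} (hf : Integrable f μ)
    (hq : AEStronglyMeasurable q μ) (hfq : Integrable (fun x ↦ f x * q x) μ) :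
    Tendsto (fun n ↦ ∫ x, boundedTruncation f n x * q x ∂μ) atTop (𝓝 (∫ x, f x * q x ∂μ)) := by
  refine tendsto_integral_of_dominated_convergence (fun x ↦ ‖f x * q x‖)
    (fun n ↦ (integrable_boundedTruncation hf n).1.mul hq) hfq.norm
    (fun n ↦ .of_forall fun x ↦ ?_)
    (.of_forall fun x ↦ (tendsto_boundedTruncation f x).mul_const _)
  rw [norm_mul, norm_mul]
  gcongr
  exact norm_boundedTruncation_le f n x

lemma integrable_mul_FHT_boundedTruncation (hf : Integrable f μI) (hg : MemLlogL g) (n : ℕ) :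
    Integrable (fun x ↦ g x * FHT (boundedTruncation f n) x) μI :=
  integrable_mul_FHT_of_norm_le hg (integrable_boundedTruncation hf n).1
    (norm_boundedTruncation_le_natCast f n)

lemma tendsto_integral_mul_FHT_boundedTruncation (hf : Integrable f μI) (hg : MemLlogL g)
    (hfg : Integrable (fun x ↦ f x * FHT g x) μI) :
    Tendsto (fun n ↦ ∫ x, g x * FHT (boundedTruncation f n) x ∂μI) atTop
      (𝓝 (-∫ x, f x * FHT g x ∂μI)) := by
  refine (tendsto_integral_boundedTruncation_mul hf
    (aestronglyMeasurable_FHT (integrable_of_memLlogL hg)) hfg).neg.congr fun n ↦ ?_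
  rw [integral_mul_FHT_of_norm_le hg (integrable_boundedTruncation hf n).1
    (norm_boundedTruncation_le_natCast f n), neg_neg]

theorem unifIntegrable_mul_FHT_boundedTruncation (hf : Integrable f μI) (hg : MemLlogL g)
    (hfg : ∀ A : Set ℝ, MeasurableSet A → Integrable (fun x ↦ f x * FHT (A.indicator g) x) μI) :
    UnifIntegrable (fun n x ↦ g x * FHT (boundedTruncation f n) x) 1 μI := by
  refine unifIntegrable_of_cauchySeq_setIntegral (integrable_mul_FHT_boundedTruncation hf hg)
    fun A hA ↦ ?_
  have hgA : MemLlogL (A.indicator g) :=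
    memLlogL_of_norm_le (c := 1) hg ((integrable_of_memLlogL hg).1.indicator hA) fun x ↦ by
      simpa using norm_indicator_le_norm_self g x
  simpa only [← integral_indicator hA, indicator_mul_left] using
    (tendsto_integral_mul_FHT_boundedTruncation hf hgA (hfg A hA)).cauchySeq

lemma exists_strictMono_ae_tendsto_mul_FHT_boundedTruncation (hf : Integrable f μI) :
    ∃ φ : ℕ → ℕ, StrictMono φ ∧ ∀ᵐ x ∂μI,
      Tendsto (fun n ↦ g x * FHT (boundedTruncation f (φ n)) x) atTop (𝓝 (g x * FHT f x)) := by
  obtain ⟨φ, hφ, hlim⟩ := exists_strictMono_ae_tendsto_FHT_boundedTruncation hf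
  exact ⟨φ, hφ, hlim.mono fun x hx ↦ hx.const_mul (g x)⟩

theorem integrable_mul_FHT (hf : Integrable f μI) (hg : MemLlogL g)
    (hfg : ∀ A : Set ℝ, MeasurableSet A → Integrable (fun x ↦ f x * FHT (A.indicator g) x) μI) :
    Integrable (fun x ↦ g x * FHT f x) μI := by
  obtain ⟨φ, -, hlim⟩ := exists_strictMono_ae_tendsto_mul_FHT_boundedTruncation (g := g) hf
  exact memLp_one_iff_integrable.1 <| memLp_of_unifIntegrable_of_ae_tendsto
    (fun n ↦ (integrable_mul_FHT_boundedTruncation hf hg (φ n)).1)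
    (unifIntegrable_comp (unifIntegrable_mul_FHT_boundedTruncation hf hg hfg) φ) hlim

theorem integral_mul_FHT_mul (hf : Integrable f μI) (hg : MemLlogL g)
    (hfg : ∀ A : Set ℝ, MeasurableSet A → Integrable (fun x ↦ f x * FHT (A.indicator g) x) μI)
    (hb : AEStronglyMeasurable b μI) {C : ℝ} (hC : ∀ s, ‖b s‖ ≤ C)
    (hfgb : Integrable (fun x ↦ f x * FHT (fun s ↦ g s * b s) x) μI) :
    ∫ x, f x * FHT (fun s ↦ g s * b s) x ∂μI = -∫ x, b x * (g x * FHT f x) ∂μI := by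
  have hgb : MemLlogL fun s ↦ g s * b s :=
    memLlogL_of_norm_le hg ((integrable_of_memLlogL hg).1.mul hb) (c := C) fun x ↦ by
      rw [norm_mul, mul_comm]
      gcongr
      exact hC x
  obtain ⟨φ, hφ, hlim⟩ := exists_strictMono_ae_tendsto_mul_FHT_boundedTruncation (g := g) hf
  have hright := tendsto_integral_of_unifIntegrable
    (fun n ↦ (integrable_mul_FHT_boundedTruncation hf hg (φ n)).bdd_mul hb (.of_forall hC))
    (unifIntegrable_bdd_mul (fun _ ↦ hC)
      (unifIntegrable_comp (unifIntegrable_mul_FHT_boundedTruncation hf hg hfg) φ))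
    (hlim.mono fun x hx ↦ hx.const_mul (b x))
  have hleft := (tendsto_integral_mul_FHT_boundedTruncation hf hgb hfgb).comp hφ.tendsto_atTop
  rw [← tendsto_nhds_unique (hleft.congr fun n ↦ ?_) hright, neg_neg]
  simp only [Function.comp_apply, mul_assoc, mul_left_comm (g _)]

theorem cauchyTransform_mul_FHT_add_mul_FHT (hf : Integrable f μI) (hg : MemLlogL g)
    (hfg : ∀ A : Set ℝ, MeasurableSet A → Integrable (fun x ↦ f x * FHT (A.indicator g) x) μI)
    {z : ℂ} (hz : 0 < z.im) :
    cauchyTransform μI (fun y ↦ g y * FHT f y + f y * FHT g y) z =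
      cauchyTransform μI f z * cauchyTransform μI g z := by
  set b : ℝ → ℂ := fun s ↦ ((s : ℂ) - z)⁻¹
  have hb : AEStronglyMeasurable b μI := (continuous_inv_ofReal_sub hz.ne').aestronglyMeasurable
  have hC : ∀ s, ‖b s‖ ≤ |z.im|⁻¹ := norm_inv_ofReal_sub_le hz.ne'
  have hint {q : ℝ → ℂ} (hq : Integrable q μI) : Integrable (fun x ↦ b x * q x) μI :=
    hq.bdd_mul hb (.of_forall hC)
  have hfg₀ : Integrable (fun x ↦ f x * FHT g x) μI := by simpa using hfg univ .univ
  have hsub := (hint hfg₀).sub ((hint hf).const_mul (cauchyTransform μI g z))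
  have hpartial : (fun x ↦ f x * FHT (fun s ↦ g s * b s) x) =ᵐ[μI]
      fun x ↦ b x * (f x * FHT g x) - cauchyTransform μI g z * (b x * f x) := by
    filter_upwards [FHT_mul_inv_sub (integrable_of_memLlogL hg) hz] with x hx
    rw [hx]
    ring
  have hparseval := integral_mul_FHT_mul hf hg hfg hb hC (hsub.congr hpartial.symm)
  rw [integral_congr_ae hpartial, integral_sub (hint hfg₀) ((hint hf).const_mul _),
    integral_const_mul] at hparseval
  have hCauchy (q : ℝ → ℂ) : cauchyTransform μI q z = (Real.pi : ℂ)⁻¹ * ∫ x, b x * q x ∂μI := by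
    simp only [cauchyTransform, div_eq_inv_mul, b]
  have hsum : ∫ x, b x * (g x * FHT f x + f x * FHT g x) ∂μI =
      ∫ x, b x * (g x * FHT f x) ∂μI + ∫ x, b x * (f x * FHT g x) ∂μI := by
    simp only [mul_add]
    exact integral_add (hint (integrable_mul_FHT hf hg hfg)) (hint hfg₀)
  rw [hCauchy f, hCauchy fun y ↦ g y * FHT f y + f y * FHT g y, hsum]
  linear_combination (Real.pi : ℂ)⁻¹ * hparseval

end ProductFormula

end FiniteHilbert

open FiniteHilbert

/-- Poincaré–Bertrand formula: if `f ∈ L¹(-1,1)`, `g ∈ L log L(-1,1)` and `f·T(gχ_A) ∈ L¹`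
for every Borel set `A`, then `T(gT(f) + fT(g)) = T(f)T(g) - fg` a.e. on `(-1,1)`. -/
theorem poincare_bertrand_LlogL (f g : ℝ → ℂ)
    (hf : IntegrableOn f (Set.Ioo (-1 : ℝ) 1))
    (hg : MemLlogL g)
    (hfg : ∀ A : Set ℝ, MeasurableSet A →
      IntegrableOn (fun x => f x * FHT (A.indicator g) x) (Set.Ioo (-1 : ℝ) 1)) :
    ∀ᵐ x ∂μI,
      FHT (fun y => g y * FHT f y + f y * FHT g y) x = FHT f x * FHT g x - f x * g x := by
  have hfi : Integrable f μI := hf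
  have hgi : Integrable g μI := integrable_of_memLlogL hg
  have hfFHT : Integrable (fun y ↦ f y * FHT g y) μI := by
    simpa only [indicator_univ, IntegrableOn, μI] using hfg univ .univ
  have hsum := (integrable_mul_FHT hf hg hfg).add hfFHT
  filter_upwards [ae_tendsto_cauchyTransform_nhdsGT hsum, ae_tendsto_cauchyTransform_nhdsGT hfi,
    ae_tendsto_cauchyTransform_nhdsGT hgi] with x hsumx hfx hgx
  have hboundary := tendsto_nhds_unique_of_eventuallyEq hsumx (hfx.mul hgx) <| by
    filter_upwards [self_mem_nhdsWithin] with ε (hε : 0 < ε)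
    exact cauchyTransform_mul_FHT_add_mul_FHT hf hg hfg (by simpa using hε)
  simp only [Pi.add_def] at hboundary
  linear_combination hboundary + f x * g x * Complex.I_mul_I
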